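/- Under the labelled graphon model satisfying Assumptions 1 and 2, the empirical distribution function of the normalized degrees satisfies a Glivenko–Cantelli-type law: sup_{x ∈ ℝ} | (1/n) Σ_{i=1}^n 1{(d_i − n p_n)/√(n p_n(1 − p_n)) ≤ x} − F*(x) | converges in probability to 0 as n → ∞, where F*(x) = κ F_1(x) + (1 − κ) F_2(x), F_1(x) = P(Z + μ(U^{(1)}) ≤ x) and F_2(x) = P(Z + μ(U^{(2)}) ≤ x) with Z a standard normal random variable independent of U^{(1)} ~ Uniform(0, κ) and U^{(2)} ~ Uniform(κ, 1). -/

import Mathlib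

/-!
STATEMENT 5: Glivenko–Cantelli-type law for normalized degrees under the
labelled graphon model satisfying Assumptions 1 and 2:
sup_x |(1/n) Σᵢ 1{(dᵢ − n pₙ)/√(n pₙ(1−pₙ)) ≤ x} − F*(x)| →ᵖ 0, where
F* = κF₁ + (1−κ)F₂, F₁(x) = P(Z + μ(U⁽¹⁾) ≤ x), F₂(x) = P(Z + μ(U⁽²⁾) ≤ x),
Z ~ N(0,1) independent of U⁽¹⁾ ~ Unif(0,κ), U⁽²⁾ ~ Unif(κ,1).
-/

open MeasureTheory ProbabilityTheory Filter Finset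

noncomputable section

/-- Mass of a label configuration: i.i.d. labels, `true` (minority) w.p. κ. -/
def labelMass (κ : ℝ) {n : ℕ} (l : Fin n → Bool) : ℝ :=
  ∏ i, (if l i then κ else 1 - κ)

/-- The uniform probability measure on the interval `(a, b)`. -/
def unifMeasure (a b : ℝ) : Measure ℝ :=
  (ENNReal.ofReal (b - a))⁻¹ • (volume.restrict (Set.Ioo a b))

/-- Conditional law of a latent position given the node's label:
uniform on `(0, κ)` for group 1 (`true`), uniform on `(κ, 1)` for group 2. -/
def latentLaw (κ : ℝ) (b : Bool) : Measure ℝ :=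
  if b then unifMeasure 0 κ else unifMeasure κ 1

/-- Conditional mass of an adjacency configuration given the latent positions:
independent Bernoulli edges with success probability `w (u i) (u j)`, i < j. -/
def graphonEdgeMass {n : ℕ} (w : ℝ → ℝ → ℝ) (u : Fin n → ℝ)
    (a : Fin n → Fin n → Bool) : ℝ :=
  ∏ p ∈ Finset.univ.filter (fun p : Fin n × Fin n => p.1 < p.2),
    (if a p.1 p.2 then w (u p.1) (u p.2) else 1 - w (u p.1) (u p.2))

/-- `(P, c, U, A)` is a labelled graphon model with graphon `w` and minority
proportion `κ`: labels are i.i.d. (minority w.p. κ), latent positions are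
conditionally uniform on `(0,κ)` resp. `(κ,1)` given the labels, and edges are
conditionally independent Bernoulli(`w (U i) (U j)`) given the latent positions.
The joint law is pinned down on a generating π-system. -/
structure IsLabelledGraphon {Ω : Type*} [MeasurableSpace Ω] (P : Measure Ω)
    (n : ℕ) (w : ℝ → ℝ → ℝ) (κ : ℝ)
    (c : Ω → Fin n → Bool) (U : Ω → Fin n → ℝ)
    (A : Ω → Fin n → Fin n → Bool) : Prop where
  isProb : IsProbabilityMeasure P
  symm : ∀ ω i j, A ω i j = A ω j i
  loopless : ∀ ω i, A ω i i = false
  law : ∀ (l : Fin n → Bool) (S : Fin n → Set ℝ), (∀ i, MeasurableSet (S i)) →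
    ∀ (a : Fin n → Fin n → Bool), (∀ i j, a i j = a j i) → (∀ i, a i i = false) →
    P {ω | c ω = l ∧ (∀ i, U ω i ∈ S i) ∧ A ω = a}
      = ENNReal.ofReal (labelMass κ l) *
        ∫⁻ u in Set.univ.pi S, ENNReal.ofReal (graphonEdgeMass w u a)
          ∂(Measure.pi fun i => latentLaw κ (l i))

/-- Degree of node `i`. -/
def degree {n : ℕ} (A : Fin n → Fin n → Bool) (i : Fin n) : ℕ :=
  ∑ j, (if A i j then 1 else 0)

/-- The CDF of `Z + μ(U)` where `Z ~ N(0,1)` is independent of `U ~ Unif(a,b)`. -/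
def mixCDF (μ : ℝ → ℝ) (a b x : ℝ) : ℝ :=
  (((gaussianReal 0 1).prod (unifMeasure a b)) {p : ℝ × ℝ | p.1 + μ p.2 ≤ x}).toReal

/-- Empirical distribution function of the normalized degrees. -/
def empCDF {n : ℕ} (A : Fin n → Fin n → Bool) (pn x : ℝ) : ℝ :=
  ((Finset.univ.filter (fun i : Fin n =>
      ((degree A i : ℝ) - n * pn) / Real.sqrt (n * pn * (1 - pn)) ≤ x)).card : ℝ) / n

/-!
Fix two nodes. Conditionally on their latent positions, and up to a deterministic phase that
tends to `1`, the joint characteristic function of their normalized degrees is the factor of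
their common edge times the `(n - 2)`-th power of the contribution of a single third node. A
second-order expansion of that contribution shows that the joint law converges to the product of
two copies of the law of `Z + μ(U)`. Hence the indicators of two normalized degrees lying below
`x` are asymptotically uncorrelated, so by Chebyshev the empirical distribution function converges
in probability at each `x`; monotonicity and the continuity of the limit make this uniform in `x`.
-/

/-- The pairs `i < j`, i.e. the potential edges of a graph on `Fin n`. -/
abbrev Edge (n : ℕ) := {e : Fin n × Fin n // e.1 < e.2}

@[to_additive]
theorem prod_edge_eq_prod_ite {M : Type*} [CommMonoid M] {n : ℕ} (F : Fin n → Fin n → M) :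
    ∏ e : Edge n, F e.1.1 e.1.2 = ∏ a, ∏ b, if a < b then F a b else 1 := by
  rw [← Finset.prod_product', ← Finset.prod_filter, Finset.univ_product_univ,
    Finset.prod_subtype (p := fun e : Fin n × Fin n ↦ e.1 < e.2) _ (by simp)]

@[to_additive]
theorem prod_edge_succAbove {M : Type*} [CommMonoid M] {n : ℕ} {F : Fin (n + 1) → Fin (n + 1) → M}
    (hF : ∀ a b, F a b = F b a) (i : Fin (n + 1)) :
    ∏ e : Edge (n + 1), F e.1.1 e.1.2 =
      (∏ k, F i (i.succAbove k)) * ∏ e : Edge n, F (i.succAbove e.1.1) (i.succAbove e.1.2) := by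
  have row_mul_col (k : Fin n) : (if i < i.succAbove k then F i (i.succAbove k) else 1) *
      (if i.succAbove k < i then F (i.succAbove k) i else 1) = F i (i.succAbove k) := by
    rcases lt_or_gt_of_ne (Fin.succAbove_ne i k) with h | h <;> simp [h, h.not_gt, hF]
  rw [prod_edge_eq_prod_ite, prod_edge_eq_prod_ite fun a b ↦ F (i.succAbove a) (i.succAbove b),
    Fin.prod_univ_succAbove _ i]
  simp only [Fin.prod_univ_succAbove _ i, lt_irrefl, if_false, one_mul, Finset.prod_mul_distrib,
    Fin.succAbove_lt_succAbove_iff, ← mul_assoc]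
  rw [← Finset.prod_mul_distrib, Finset.prod_congr rfl fun k _ ↦ row_mul_col k]

@[to_additive]
theorem prod_edge_succAbove_succAbove {M : Type*} [CommMonoid M] {n : ℕ}
    {F : Fin (n + 2) → Fin (n + 2) → M} (hF : ∀ a b, F a b = F b a)
    (i : Fin (n + 2)) (j : Fin (n + 1))
    (hF_one : ∀ a b, F (i.succAbove (j.succAbove a)) (i.succAbove (j.succAbove b)) = 1) :
    ∏ e : Edge (n + 2), F e.1.1 e.1.2 = F i (i.succAbove j) *
      ∏ k, F i (i.succAbove (j.succAbove k)) * F (i.succAbove j) (i.succAbove (j.succAbove k)) := by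
  rw [prod_edge_succAbove hF i,
    prod_edge_succAbove (F := fun a b ↦ F (i.succAbove a) (i.succAbove b)) (fun _ _ ↦ hF _ _) j,
    Fin.prod_univ_succAbove _ j, Finset.prod_mul_distrib]
  simp only [hF_one, Finset.prod_const_one, mul_one, mul_assoc]

/-- The symmetric adjacency matrix without loops whose entries above the diagonal are given by an
edge configuration. -/
def adjMatrix {n : ℕ} (e : Edge n → Bool) (i j : Fin n) : Bool :=
  if h : i < j then e ⟨(i, j), h⟩ else if h : j < i then e ⟨(j, i), h⟩ else false

theorem adjMatrix_comm {n : ℕ} (e : Edge n → Bool) (i j : Fin n) :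
    adjMatrix e i j = adjMatrix e j i := by
  rcases lt_trichotomy i j with h | rfl | h
  · simp [adjMatrix, h, h.not_gt]
  · rfl
  · simp [adjMatrix, h, h.not_gt]

@[simp]
theorem adjMatrix_self {n : ℕ} (e : Edge n → Bool) (i : Fin n) : adjMatrix e i i = false := by
  simp [adjMatrix]

@[simp]
theorem adjMatrix_edge {n : ℕ} (e : Edge n → Bool) (p : Edge n) :
    adjMatrix e p.1.1 p.1.2 = e p := by
  simp [adjMatrix, p.2]

theorem adjMatrix_restrict {n : ℕ} {a : Fin n → Fin n → Bool} (h_symm : ∀ i j, a i j = a j i)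
    (h_loopless : ∀ i, a i i = false) : adjMatrix (fun p ↦ a p.1.1 p.1.2) = a := by
  funext i j
  rcases lt_trichotomy i j with h | rfl | h
  · simp [adjMatrix, h]
  · simp [h_loopless]
  · simp [adjMatrix, h, h.not_gt, h_symm i j]

/-- A graphon on a measurable space of latent positions. -/
structure IsGraphon {X : Type*} [MeasurableSpace X] (W : X → X → ℝ) : Prop where
  symm : ∀ x y, W x y = W y x
  measurable : Measurable (Function.uncurry W)
  mem_Icc : ∀ x y, W x y ∈ Set.Icc (0 : ℝ) 1

theorem IsGraphon.measurable_comp₂ {X Y : Type*} [MeasurableSpace X] [MeasurableSpace Y]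
    {W : X → X → ℝ} (hW : IsGraphon W) {f g : Y → X} (hf : Measurable f) (hg : Measurable g) :
    Measurable fun y ↦ W (f y) (g y) :=
  hW.measurable.comp (hf.prodMk hg)

section EdgeWeight

variable {X : Type*} {n : ℕ}

/-- Conditional probability of an edge configuration given the latent positions `u`. -/
def edgeWeight (W : X → X → ℝ) (u : Fin n → X) (e : Edge n → Bool) : ℝ :=
  ∏ p : Edge n, if e p then W (u p.1.1) (u p.1.2) else 1 - W (u p.1.1) (u p.1.2)

theorem sum_edgeWeight_mul_prod (W : X → X → ℝ) (u : Fin n → X) (g : Edge n → Bool → ℂ) :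
    ∑ e, (edgeWeight W u e : ℂ) * ∏ p, g p (e p) =
      ∏ p : Edge n, ((W (u p.1.1) (u p.1.2) : ℂ) * g p true +
        (1 - (W (u p.1.1) (u p.1.2) : ℂ)) * g p false) := by
  have prod_sum := Finset.prod_univ_sum (fun _ : Edge n ↦ (Finset.univ : Finset Bool)) fun p b ↦
    ((if b then W (u p.1.1) (u p.1.2) else 1 - W (u p.1.1) (u p.1.2) : ℝ) : ℂ) * g p b
  simp only [Fintype.piFinset_univ, Fintype.sum_bool, Finset.prod_mul_distrib] at prod_sum
  simp only [edgeWeight]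
  push_cast at prod_sum ⊢
  exact prod_sum.symm

theorem sum_edgeWeight (W : X → X → ℝ) (u : Fin n → X) : ∑ e, edgeWeight W u e = 1 := by
  have h := sum_edgeWeight_mul_prod W u fun _ _ ↦ 1
  simp only [Finset.prod_const_one, mul_one, add_sub_cancel] at h
  exact_mod_cast h

variable [MeasurableSpace X] {W : X → X → ℝ}

theorem edgeWeight_nonneg (hW : IsGraphon W) (u : Fin n → X) (e : Edge n → Bool) :
    0 ≤ edgeWeight W u e := by
  refine Finset.prod_nonneg fun p _ ↦ ?_
  have := hW.mem_Icc (u p.1.1) (u p.1.2)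
  split_ifs <;> linarith [this.1, this.2]

theorem edgeWeight_le_one (hW : IsGraphon W) (u : Fin n → X) (e : Edge n → Bool) :
    edgeWeight W u e ≤ 1 :=
  sum_edgeWeight W u ▸ single_le_sum (fun e' _ ↦ edgeWeight_nonneg hW u e') (mem_univ e)

theorem measurable_edgeWeight (hW : Measurable (Function.uncurry W)) (e : Edge n → Bool) :
    Measurable fun u ↦ edgeWeight W u e := by
  refine Finset.measurable_prod _ fun p _ ↦ ?_
  have hWp : Measurable fun u : Fin n → X ↦ W (u p.1.1) (u p.1.2) :=
    hW.comp (f := fun u : Fin n → X ↦ (u p.1.1, u p.1.2)) (by fun_prop)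
  split_ifs
  exacts [hWp, hWp.const_sub 1]

theorem integrable_edgeWeight (hW : IsGraphon W) (ρ : Measure (Fin n → X)) [IsFiniteMeasure ρ]
    (e : Edge n → Bool) : Integrable (fun u ↦ edgeWeight W u e) ρ :=
  .of_bound (measurable_edgeWeight hW.measurable e).aestronglyMeasurable 1 <| ae_of_all _ fun u ↦ by
    rw [Real.norm_of_nonneg (edgeWeight_nonneg hW u e)]
    exact edgeWeight_le_one hW u e

end EdgeWeight

section GraphonLaw

variable {X : Type*} [MeasurableSpace X] {W : X → X → ℝ} {π : Measure X} {n : ℕ}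

/-- The law of the adjacency matrix of the `W`-random graph on `n` nodes whose latent positions are
i.i.d. with law `π`. -/
def graphonLaw (W : X → X → ℝ) (π : Measure X) (n : ℕ) : Measure (Fin n → Fin n → Bool) :=
  ∑ e : Edge n → Bool,
    (∫⁻ u, ENNReal.ofReal (edgeWeight W u e) ∂Measure.pi fun _ : Fin n ↦ π) •
      Measure.dirac (adjMatrix e)

theorem graphonLaw_apply (B : Set (Fin n → Fin n → Bool)) [DecidablePred (· ∈ B)] :
    graphonLaw W π n B = ∑ e with adjMatrix e ∈ B,
      ∫⁻ u, ENNReal.ofReal (edgeWeight W u e) ∂Measure.pi fun _ : Fin n ↦ π := by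
  simp only [graphonLaw, Measure.coe_finsetSum, Finset.sum_apply, Measure.smul_apply, smul_eq_mul,
    Measure.dirac_apply, Set.indicator_apply, Pi.one_apply, mul_ite, mul_one, mul_zero,
    Finset.sum_filter]

theorem integral_graphonLaw [IsFiniteMeasure π] (hW : IsGraphon W)
    (f : (Fin n → Fin n → Bool) → ℂ) :
    ∫ a, f a ∂graphonLaw W π n =
      ∫ u, ∑ e, (edgeWeight W u e : ℂ) * f (adjMatrix e) ∂Measure.pi fun _ : Fin n ↦ π := by
  have h_int := integrable_edgeWeight (n := n) hW (Measure.pi fun _ ↦ π)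
  have lintegral_eq (e : Edge n → Bool) :=
    (ofReal_integral_eq_lintegral_ofReal (h_int e) (ae_of_all _ (edgeWeight_nonneg hW · e))).symm
  rw [integral_finsetSum _ fun e _ ↦ (h_int e).ofReal.mul_const _, graphonLaw,
    integral_finsetSum_measure fun e _ ↦ ?_]
  · refine Finset.sum_congr rfl fun e _ ↦ ?_
    rw [integral_smul_measure, integral_dirac, lintegral_eq, ENNReal.toReal_ofReal
      (integral_nonneg (edgeWeight_nonneg hW · e)), integral_mul_const, integral_complex_ofReal]
    simp
  · rw [lintegral_eq]
    exact (integrable_dirac (by simp)).smul_measure ENNReal.ofReal_ne_top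

theorem isProbabilityMeasure_graphonLaw [IsProbabilityMeasure π] (hW : IsGraphon W) :
    IsProbabilityMeasure (graphonLaw W π n) := by
  classical
  constructor
  have h_meas (e : Edge n → Bool) : Measurable fun u ↦ ENNReal.ofReal (edgeWeight W u e) :=
    (measurable_edgeWeight hW.measurable e).ennreal_ofReal
  simp only [graphonLaw_apply, Set.mem_univ, Finset.filter_true]
  rw [← lintegral_finsetSum _ fun e _ ↦ h_meas e]
  simp only [← ENNReal.ofReal_sum_of_nonneg fun e _ ↦ edgeWeight_nonneg hW _ e, sum_edgeWeight,
    ENNReal.ofReal_one, lintegral_const, measure_univ, one_mul]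

end GraphonLaw

/-- The characteristic function `E[exp (i α (B - p))]` of a Bernoulli variable `B` with success
probability `q`, centred at a reference probability `p`. -/
def bernoulliCharFun (p q α : ℝ) : ℂ :=
  q * Complex.exp ((α * (1 - p) : ℝ) * Complex.I) +
    (1 - q) * Complex.exp ((-(α * p) : ℝ) * Complex.I)

@[simp]
theorem bernoulliCharFun_zero (p q : ℝ) : bernoulliCharFun p q 0 = 1 := by
  simp [bernoulliCharFun]

theorem norm_bernoulliCharFun_le {q : ℝ} (hq : q ∈ Set.Icc (0 : ℝ) 1) (p α : ℝ) :
    ‖bernoulliCharFun p q α‖ ≤ 1 := by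
  refine (norm_add_le _ _).trans_eq ?_
  rw [norm_mul, norm_mul, Complex.norm_exp_ofReal_mul_I, Complex.norm_exp_ofReal_mul_I, mul_one,
    mul_one, ← Complex.ofReal_one, ← Complex.ofReal_sub, Complex.norm_real, Complex.norm_real,
    Real.norm_of_nonneg hq.1, Real.norm_of_nonneg (sub_nonneg.2 hq.2), add_sub_cancel]

@[fun_prop]
theorem continuous_bernoulliCharFun (p α : ℝ) : Continuous fun q ↦ bernoulliCharFun p q α := by
  unfold bernoulliCharFun
  fun_prop

/-- The coefficient of the edge indicator of `{a, b}` in the linear combination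
`s * degree i + t * degree j`. -/
def edgeCoeff {n : ℕ} (i j : Fin n) (s t : ℝ) (a b : Fin n) : ℝ :=
  (if a = i ∨ b = i then s else 0) + (if a = j ∨ b = j then t else 0)

theorem edgeCoeff_comm {n : ℕ} (i j : Fin n) (s t : ℝ) (a b : Fin n) :
    edgeCoeff i j s t a b = edgeCoeff i j s t b a := by
  simp only [edgeCoeff, or_comm]

section EdgeCoeff

variable {n : ℕ} (i : Fin (n + 2)) (j : Fin (n + 1)) (s t : ℝ) (k l : Fin n)

theorem edgeCoeff_pair : edgeCoeff i (i.succAbove j) s t i (i.succAbove j) = s + t := by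
  simp [edgeCoeff]

theorem edgeCoeff_left :
    edgeCoeff i (i.succAbove j) s t i (i.succAbove (j.succAbove k)) = s := by
  simp [edgeCoeff, Fin.succAbove_ne, Fin.ne_succAbove]

theorem edgeCoeff_right :
    edgeCoeff i (i.succAbove j) s t (i.succAbove j) (i.succAbove (j.succAbove k)) = t := by
  simp [edgeCoeff, Fin.succAbove_ne]

theorem edgeCoeff_off :
    edgeCoeff i (i.succAbove j) s t (i.succAbove (j.succAbove k))
      (i.succAbove (j.succAbove l)) = 0 := by
  simp [edgeCoeff, Fin.succAbove_ne]

end EdgeCoeff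

theorem degree_eq_sum_succAbove {n : ℕ} {a : Fin (n + 1) → Fin (n + 1) → Bool}
    (h_loopless : ∀ i, a i i = false) (i : Fin (n + 1)) :
    (degree a i : ℝ) = ∑ k, if a i (i.succAbove k) then (1 : ℝ) else 0 := by
  simp [degree, Fin.sum_univ_succAbove _ i, h_loopless]

theorem sum_edgeCoeff_mul {n : ℕ} (e : Edge (n + 2) → Bool) (i : Fin (n + 2)) (j : Fin (n + 1))
    (p s t : ℝ) :
    ∑ x : Edge (n + 2), edgeCoeff i (i.succAbove j) s t x.1.1 x.1.2 * ((if e x then 1 else 0) - p) =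
      s * (degree (adjMatrix e) i - (n + 1) * p) +
        t * (degree (adjMatrix e) (i.succAbove j) - (n + 1) * p) := by
  have h_sum := sum_edge_succAbove_succAbove (F := fun a b ↦
    edgeCoeff i (i.succAbove j) s t a b * ((if adjMatrix e a b then 1 else 0) - p))
    (fun a b ↦ by rw [edgeCoeff_comm, adjMatrix_comm]) i j (fun a b ↦ by simp [edgeCoeff_off])
  have degree_j : (degree (adjMatrix e) (i.succAbove j) : ℝ) = (if adjMatrix e i (i.succAbove j)
      then 1 else 0) + ∑ k, if adjMatrix e (i.succAbove j) (i.succAbove (j.succAbove k))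
      then (1 : ℝ) else 0 := by
    simp [degree, Fin.sum_univ_succAbove _ i, Fin.sum_univ_succAbove _ j, adjMatrix_comm e _ i]
  simp only [adjMatrix_edge] at h_sum
  rw [h_sum, degree_j, degree_eq_sum_succAbove (adjMatrix_self e), Fin.sum_univ_succAbove _ j]
  simp only [edgeCoeff_pair, edgeCoeff_left, edgeCoeff_right, Finset.sum_add_distrib,
    ← Finset.mul_sum, Finset.sum_sub_distrib, Finset.sum_const, Finset.card_univ, Fintype.card_fin,
    nsmul_eq_mul]
  ring

theorem integral_pi_eq_integral_prod_pow {X : Type*} [MeasurableSpace X] {π : Measure X}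
    [IsProbabilityMeasure π] {n : ℕ} (i : Fin (n + 2)) (j : Fin (n + 1))
    {f : X × X → ℂ} {g : X × X → X → ℂ} (hf : Measurable f) (hg : Measurable (Function.uncurry g))
    (hf_le : ∀ z, ‖f z‖ ≤ 1) (hg_le : ∀ z v, ‖g z v‖ ≤ 1) :
    ∫ u, f (u i, u (i.succAbove j)) * ∏ k, g (u i, u (i.succAbove j)) (u (i.succAbove
      (j.succAbove k))) ∂(Measure.pi fun _ ↦ π) = ∫ z, f z * (∫ v, g z v ∂π) ^ n ∂(π.prod π) := by
  let F (z : X × X) (u : Fin n → X) : ℂ := f z * ∏ k, g z (u k)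
  have F_meas : Measurable (Function.uncurry F) := by
    refine (hf.comp measurable_fst).mul (Finset.measurable_fun_prod _ fun k _ ↦ ?_)
    exact hg.comp (measurable_fst.prodMk ((measurable_pi_apply k).comp measurable_snd))
  have F_int : Integrable (Function.uncurry F) ((π.prod π).prod (Measure.pi fun _ ↦ π)) := by
    refine Integrable.of_bound F_meas.aestronglyMeasurable 1 (ae_of_all _ fun z ↦ ?_)
    simp only [Function.uncurry, F, norm_mul, norm_prod]
    exact mul_le_one₀ (hf_le _) (by positivity) (prod_le_one (by simp) (by simp [hg_le]))
  have split_i := (measurePreserving_piFinSuccAbove (fun _ : Fin (n + 2) ↦ π) i).integral_comp'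
    (g := fun z ↦ F (z.1, z.2 j) fun k ↦ z.2 (j.succAbove k))
  have split_j := ((MeasurePreserving.id π).prod
    (measurePreserving_piFinSuccAbove (fun _ : Fin (n + 1) ↦ π) j)).integral_comp
    ((MeasurableEquiv.refl X).prodCongr (MeasurableEquiv.piFinSuccAbove _ j)).measurableEmbedding
    (fun z ↦ F (z.1, z.2.1) z.2.2)
  have assoc := (measurePreserving_prodAssoc π π (Measure.pi fun _ : Fin n ↦ π)).integral_comp'
    (g := fun z ↦ F (z.1, z.2.1) z.2.2)
  calc _ = ∫ z, Function.uncurry F z ∂((π.prod π).prod (Measure.pi fun _ ↦ π)) :=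
        split_i.trans (split_j.trans assoc.symm)
    _ = _ := by
      rw [integral_prod _ F_int]
      simp only [Function.uncurry, F, integral_const_mul, integral_fintype_prod_eq_pow,
        Fintype.card_fin]

section PairCharFun

variable {X : Type*} [MeasurableSpace X] {W : X → X → ℝ}

/-- The characteristic function at `(s, t)` of the centred edge indicators joining two nodes with
latent positions `z.1` and `z.2` to a common third node of random latent position. -/
def thirdNodeCharFun (W : X → X → ℝ) (π : Measure X) (p s t : ℝ) (z : X × X) : ℂ :=
  ∫ v, bernoulliCharFun p (W z.1 v) s * bernoulliCharFun p (W z.2 v) t ∂π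

theorem sum_edgeWeight_mul_exp (hW : IsGraphon W) {n : ℕ} (i : Fin (n + 2)) (j : Fin (n + 1))
    (p s t : ℝ) (u : Fin (n + 2) → X) :
    ∑ e, (edgeWeight W u e : ℂ) * Complex.exp
      ((s * (degree (adjMatrix e) i - (n + 1) * p) +
        t * (degree (adjMatrix e) (i.succAbove j) - (n + 1) * p) : ℝ) * Complex.I) =
      bernoulliCharFun p (W (u i) (u (i.succAbove j))) (s + t) *
        ∏ k, bernoulliCharFun p (W (u i) (u (i.succAbove (j.succAbove k)))) s *
          bernoulliCharFun p (W (u (i.succAbove j)) (u (i.succAbove (j.succAbove k)))) t := by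
  have h_prod := prod_edge_succAbove_succAbove (F := fun a b ↦
    bernoulliCharFun p (W (u a) (u b)) (edgeCoeff i (i.succAbove j) s t a b))
    (fun a b ↦ by rw [edgeCoeff_comm, hW.symm]) i j (fun a b ↦ by simp [edgeCoeff_off])
  simp only [edgeCoeff_pair, edgeCoeff_left, edgeCoeff_right] at h_prod
  simp only [← h_prod, ← sum_edgeCoeff_mul, Complex.ofReal_sum, Finset.sum_mul, Complex.exp_sum]
  rw [sum_edgeWeight_mul_prod W u fun x b ↦ Complex.exp ((edgeCoeff i (i.succAbove j) s t x.1.1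
    x.1.2 * ((if b then 1 else 0) - p) : ℝ) * Complex.I)]
  simp [bernoulliCharFun]

variable (hW : IsGraphon W) (p s t : ℝ)

include hW

theorem IsGraphon.measurable_bernoulliCharFun {Y : Type*} [MeasurableSpace Y] {f g : Y → X}
    (hf : Measurable f) (hg : Measurable g) (α : ℝ) :
    Measurable fun y ↦ bernoulliCharFun p (W (f y) (g y)) α :=
  (continuous_bernoulliCharFun p α).measurable.comp (hW.measurable_comp₂ hf hg)

theorem IsGraphon.measurable_bernoulliCharFun_mul :
    Measurable (Function.uncurry fun (z : X × X) v ↦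
      bernoulliCharFun p (W z.1 v) s * bernoulliCharFun p (W z.2 v) t) :=
  (hW.measurable_bernoulliCharFun p (by fun_prop) measurable_snd s).mul
    (hW.measurable_bernoulliCharFun p (by fun_prop) measurable_snd t)

theorem IsGraphon.norm_bernoulliCharFun_mul_le (x y v : X) :
    ‖bernoulliCharFun p (W x v) s * bernoulliCharFun p (W y v) t‖ ≤ 1 := by
  rw [norm_mul]
  exact mul_le_one₀ (norm_bernoulliCharFun_le (hW.mem_Icc _ _) _ _) (norm_nonneg _)
    (norm_bernoulliCharFun_le (hW.mem_Icc _ _) _ _)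

theorem measurable_thirdNodeCharFun (π : Measure X) [SFinite π] :
    Measurable (thirdNodeCharFun W π p s t) :=
  ((hW.measurable_bernoulliCharFun_mul p s t).stronglyMeasurable.integral_prod_right
    (ν := π)).measurable

variable (π : Measure X) [IsProbabilityMeasure π]

theorem norm_thirdNodeCharFun_le (z : X × X) : ‖thirdNodeCharFun W π p s t z‖ ≤ 1 := by
  simpa [thirdNodeCharFun] using norm_integral_le_of_norm_le_const (μ := π)
    (ae_of_all _ (hW.norm_bernoulliCharFun_mul_le p s t z.1 z.2))

theorem integral_exp_degree_graphonLaw {n : ℕ} (i : Fin (n + 2)) (j : Fin (n + 1)) :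
    ∫ a, Complex.exp ((s * (degree a i - (n + 1) * p) +
      t * (degree a (i.succAbove j) - (n + 1) * p) : ℝ) * Complex.I) ∂graphonLaw W π (n + 2) =
      ∫ z, bernoulliCharFun p (W z.1 z.2) (s + t) * thirdNodeCharFun W π p s t z ^ n
        ∂(π.prod π) := by
  rw [integral_graphonLaw hW]
  simp only [sum_edgeWeight_mul_exp hW]
  exact integral_pi_eq_integral_prod_pow i j (f := fun z ↦ bernoulliCharFun p (W z.1 z.2) (s + t))
    (hW.measurable_bernoulliCharFun p measurable_fst measurable_snd _)
    (hW.measurable_bernoulliCharFun_mul p s t)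
    (fun z ↦ norm_bernoulliCharFun_le (hW.mem_Icc _ _) _ _)
    (fun z ↦ hW.norm_bernoulliCharFun_mul_le p s t z.1 z.2)

end PairCharFun

section Taylor

/-- The coefficient of `q` in the affine function `q ↦ bernoulliCharFun p q α`. -/
def bernoulliCharFunSlope (p α : ℝ) : ℂ :=
  Complex.exp ((α * (1 - p) : ℝ) * Complex.I) - Complex.exp ((-(α * p) : ℝ) * Complex.I)

theorem bernoulliCharFun_eq_add_slope (p q α : ℝ) :
    bernoulliCharFun p q α =
      bernoulliCharFun p p α + ((q - p : ℝ) : ℂ) * bernoulliCharFunSlope p α := by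
  simp only [bernoulliCharFun, bernoulliCharFunSlope]
  push_cast
  ring

theorem norm_exp_mul_I_sub_quadratic_le {θ : ℝ} (hθ : |θ| ≤ 1) :
    ‖Complex.exp (θ * Complex.I) - (1 + θ * Complex.I - θ ^ 2 / 2)‖ ≤ |θ| ^ 3 := by
  have h := Complex.exp_bound (x := θ * Complex.I) (n := 3) (by simpa using hθ) (by norm_num)
  simp only [Finset.sum_range_succ, Finset.sum_range_zero, norm_mul, Complex.norm_I,
    Complex.norm_real, Real.norm_eq_abs, mul_one, mul_pow, Complex.I_sq, Nat.factorial] at h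
  refine (le_of_eq ?_).trans (h.trans ?_)
  · congr 1
    norm_num
    ring
  · norm_num
    nlinarith [pow_nonneg (abs_nonneg θ) 3]

variable {p α : ℝ}

theorem norm_bernoulliCharFun_self_sub_le (hp : p ∈ Set.Icc (0 : ℝ) 1) (hα : |α| ≤ 1) :
    ‖bernoulliCharFun p p α - 1 + (p * (1 - p) * α ^ 2 / 2 : ℝ)‖ ≤ 2 * (p * (1 - p)) * |α| ^ 3 := by
  obtain ⟨hp0, hp1⟩ := hp
  have hq0 : 0 ≤ 1 - p := sub_nonneg.2 hp1
  have abs_up : |α * (1 - p)| = |α| * (1 - p) := by rw [abs_mul, abs_of_nonneg hq0]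
  have abs_down : |-(α * p)| = |α| * p := by rw [abs_neg, abs_mul, abs_of_nonneg hp0]
  have taylor_up := norm_exp_mul_I_sub_quadratic_le (θ := α * (1 - p))
    (abs_up ▸ mul_le_one₀ hα hq0 (by linarith))
  have taylor_down := norm_exp_mul_I_sub_quadratic_le (θ := -(α * p))
    (abs_down ▸ mul_le_one₀ hα hp0 hp1)
  have split : bernoulliCharFun p p α - 1 + (p * (1 - p) * α ^ 2 / 2 : ℝ) =
      (p : ℂ) * (Complex.exp ((α * (1 - p) : ℝ) * Complex.I) -
        (1 + (α * (1 - p) : ℝ) * Complex.I - ((α * (1 - p) : ℝ) : ℂ) ^ 2 / 2)) +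
      ((1 - p : ℝ) : ℂ) * (Complex.exp ((-(α * p) : ℝ) * Complex.I) -
        (1 + (-(α * p) : ℝ) * Complex.I - ((-(α * p) : ℝ) : ℂ) ^ 2 / 2)) := by
    rw [bernoulliCharFun]
    push_cast
    ring
  have cube_le {r : ℝ} (hr0 : 0 ≤ r) (hr1 : r ≤ 1) : (|α| * r) ^ 3 ≤ r * |α| ^ 3 := by
    rw [mul_pow, mul_comm]
    exact mul_le_mul_of_nonneg_right (pow_le_of_le_one hr0 hr1 three_ne_zero) (by positivity)
  rw [abs_up] at taylor_up
  rw [abs_down] at taylor_down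
  rw [split]
  refine (norm_add_le _ _).trans ?_
  rw [norm_mul, norm_mul, Complex.norm_real, Complex.norm_real, Real.norm_of_nonneg hp0,
    Real.norm_of_nonneg hq0]
  have bound_up := mul_le_mul_of_nonneg_left (taylor_up.trans (cube_le hq0 (by linarith))) hp0
  have bound_down := mul_le_mul_of_nonneg_left (taylor_down.trans (cube_le hp0 hp1)) hq0
  linarith

theorem norm_bernoulliCharFunSlope_sub_le (hp : p ∈ Set.Icc (0 : ℝ) 1) (hα : |α| ≤ 1) :
    ‖bernoulliCharFunSlope p α - α * Complex.I‖ ≤ 2 * α ^ 2 := by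
  have remainder_le {r : ℝ} (hr : |r| ≤ 1) :
      ‖Complex.exp ((α * r : ℝ) * Complex.I) - 1 - (α * r : ℝ) * Complex.I‖ ≤ α ^ 2 := by
    have norm_eq : ‖((α * r : ℝ) : ℂ) * Complex.I‖ = |α| * |r| := by simp
    refine (Complex.norm_exp_sub_one_sub_id_le ?_).trans ?_
    · exact norm_eq ▸ mul_le_one₀ hα (abs_nonneg r) hr
    · rw [norm_eq, mul_pow, sq_abs, sq_abs]
      exact mul_le_of_le_one_right (sq_nonneg α) ((sq_le_one_iff_abs_le_one r).2 hr)
  have bound_up := remainder_le (r := 1 - p) (abs_le.2 ⟨by linarith [hp.2], by linarith [hp.1]⟩)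
  have bound_down := remainder_le (r := -p) (abs_le.2 ⟨by linarith [hp.2], by linarith [hp.1]⟩)
  calc ‖bernoulliCharFunSlope p α - α * Complex.I‖
      = ‖(Complex.exp ((α * (1 - p) : ℝ) * Complex.I) - 1 - (α * (1 - p) : ℝ) * Complex.I) -
          (Complex.exp ((α * -p : ℝ) * Complex.I) - 1 - (α * -p : ℝ) * Complex.I)‖ := by
        rw [bernoulliCharFunSlope, mul_neg]
        push_cast
        ring_nf
    _ ≤ 2 * α ^ 2 := (norm_sub_le _ _).trans (by linarith)

end Taylor

section Scaling

/-- The standard deviation of the binomial law with parameters `n` and `p`. -/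
def binomialStd (p : ℝ) (n : ℕ) : ℝ := √(n * p * (1 - p))

variable {p : ℕ → ℝ} (hp : Tendsto (fun n : ℕ ↦ n * p n * (1 - p n)) atTop atTop)

include hp

theorem tendsto_binomialStd : Tendsto (fun n ↦ binomialStd (p n) n) atTop atTop :=
  Real.tendsto_sqrt_atTop.comp hp

theorem tendsto_div_binomialStd (s : ℝ) :
    Tendsto (fun n ↦ s / binomialStd (p n) n) atTop (nhds 0) :=
  (tendsto_binomialStd hp).const_div_atTop s

theorem eventually_binomialStd :
    ∀ᶠ n : ℕ in atTop, p n ∈ Set.Ioo (0 : ℝ) 1 ∧ 0 < binomialStd (p n) n ∧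
      binomialStd (p n) n ^ 2 = n * (p n * (1 - p n)) := by
  filter_upwards [hp.eventually_gt_atTop 0] with n hn
  have hvar : 0 < p n * (1 - p n) :=
    pos_of_mul_pos_right (mul_assoc (n : ℝ) _ _ ▸ hn) (Nat.cast_nonneg n)
  refine ⟨⟨by nlinarith, by nlinarith⟩, Real.sqrt_pos.2 hn, ?_⟩
  rw [binomialStd, Real.sq_sqrt hn.le, mul_assoc]

theorem tendsto_mul_bernoulliCharFun_self_sub_one (s : ℝ) :
    Tendsto (fun n : ℕ ↦ (n : ℂ) *
      (bernoulliCharFun (p n) (p n) (s / binomialStd (p n) n) - 1)) atTop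
      (nhds (-(s ^ 2 / 2 : ℝ))) := by
  rw [tendsto_iff_norm_sub_tendsto_zero]
  have bound_tendsto : Tendsto (fun n ↦ 2 * |s| ^ 3 / binomialStd (p n) n) atTop (nhds 0) :=
    tendsto_div_binomialStd hp _
  refine squeeze_zero' (Eventually.of_forall fun n ↦ norm_nonneg _) ?_ bound_tendsto
  filter_upwards [eventually_binomialStd hp,
    (tendsto_div_binomialStd hp s).eventually (Metric.closedBall_mem_nhds 0 one_pos)] with
    n ⟨hpn, hσ, hσ_sq⟩ hs
  set σ := binomialStd (p n) n
  have taylor := norm_bernoulliCharFun_self_sub_le (Set.Ioo_subset_Icc_self hpn)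
    (by simpa [abs_div] using hs : |s / σ| ≤ 1)
  have quadratic : (n : ℝ) * (p n * (1 - p n) * (s / σ) ^ 2 / 2) = s ^ 2 / 2 := by
    field_simp
    rw [hσ_sq]
    ring
  calc ‖(n : ℂ) * (bernoulliCharFun (p n) (p n) (s / σ) - 1) - (-(s ^ 2 / 2 : ℝ))‖
      = ‖(n : ℂ) * (bernoulliCharFun (p n) (p n) (s / σ) - 1 +
          (p n * (1 - p n) * (s / σ) ^ 2 / 2 : ℝ))‖ := by
        rw [← quadratic]
        push_cast
        ring_nf
    _ ≤ n * (2 * (p n * (1 - p n)) * |s / σ| ^ 3) := by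
        rw [norm_mul, Complex.norm_natCast]
        gcongr
    _ = 2 * |s| ^ 3 / σ := by
        rw [abs_div, abs_of_pos hσ]
        field_simp
        rw [hσ_sq]
        ring

theorem tendsto_bernoulliCharFun_self (s : ℝ) :
    Tendsto (fun n : ℕ ↦ bernoulliCharFun (p n) (p n) (s / binomialStd (p n) n)) atTop
      (nhds 1) := by
  have h := (tendsto_inv_atTop_nhds_zero_nat (𝕜 := ℂ)).mul
    (tendsto_mul_bernoulliCharFun_self_sub_one hp s)
  rw [zero_mul] at h
  refine (zero_add (1 : ℂ) ▸ h.add_const 1).congr' ?_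
  filter_upwards [eventually_ne_atTop 0] with n hn
  rw [inv_mul_cancel_left₀ (Nat.cast_ne_zero.2 hn), sub_add_cancel]

theorem tendsto_mul_bernoulliCharFunSlope (s : ℝ) :
    Tendsto (fun n : ℕ ↦ (binomialStd (p n) n : ℂ) *
      bernoulliCharFunSlope (p n) (s / binomialStd (p n) n)) atTop (nhds (s * Complex.I)) := by
  rw [tendsto_iff_norm_sub_tendsto_zero]
  have bound_tendsto : Tendsto (fun n ↦ 2 * s ^ 2 / binomialStd (p n) n) atTop (nhds 0) :=
    tendsto_div_binomialStd hp _
  refine squeeze_zero' (Eventually.of_forall fun n ↦ norm_nonneg _) ?_ bound_tendsto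
  filter_upwards [eventually_binomialStd hp,
    (tendsto_div_binomialStd hp s).eventually (Metric.closedBall_mem_nhds 0 one_pos)] with
    n ⟨hpn, hσ, _⟩ hs
  set σ := binomialStd (p n) n
  have taylor := norm_bernoulliCharFunSlope_sub_le (Set.Ioo_subset_Icc_self hpn)
    (by simpa [abs_div] using hs : |s / σ| ≤ 1)
  calc ‖(σ : ℂ) * bernoulliCharFunSlope (p n) (s / σ) - s * Complex.I‖
      = ‖(σ : ℂ) * (bernoulliCharFunSlope (p n) (s / σ) - (s / σ : ℝ) * Complex.I)‖ := by
        rw [mul_sub, ← mul_assoc, ← Complex.ofReal_mul, mul_div_cancel₀ _ hσ.ne']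
    _ ≤ σ * (2 * (s / σ) ^ 2) := by
        rw [norm_mul, Complex.norm_of_nonneg hσ.le]
        gcongr
    _ = 2 * s ^ 2 / σ := by field_simp

theorem tendsto_div_binomialStd_mul_self (s : ℝ) :
    Tendsto (fun n : ℕ ↦ s / binomialStd (p n) n * p n) atTop (nhds 0) := by
  refine (tendsto_div_binomialStd hp s).zero_mul_isBoundedUnder_le ⟨1, ?_⟩
  rw [eventually_map]
  filter_upwards [eventually_binomialStd hp] with n ⟨hpn, _⟩
  rw [Function.comp_apply, Real.norm_of_nonneg hpn.1.le]
  exact hpn.2.le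

theorem tendsto_bernoulliCharFunSlope (s : ℝ) :
    Tendsto (fun n : ℕ ↦ bernoulliCharFunSlope (p n) (s / binomialStd (p n) n)) atTop
      (nhds 0) := by
  have h := ((Complex.continuous_ofReal.tendsto 0).comp
    (tendsto_inv_atTop_zero.comp (tendsto_binomialStd hp))).mul
    (tendsto_mul_bernoulliCharFunSlope hp s)
  rw [Complex.ofReal_zero, zero_mul] at h
  refine h.congr' ?_
  filter_upwards [eventually_binomialStd hp] with n ⟨_, hσ, _⟩
  simp only [Function.comp_apply, Complex.ofReal_inv]
  rw [inv_mul_cancel_left₀ (Complex.ofReal_ne_zero.2 hσ.ne')]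

theorem tendsto_bernoulliCharFun {q : ℕ → ℝ} (hq : ∀ n, q n ∈ Set.Icc 0 1) (s : ℝ) :
    Tendsto (fun n : ℕ ↦ bernoulliCharFun (p n) (q n) (s / binomialStd (p n) n)) atTop
      (nhds 1) := by
  have dev_bounded : IsBoundedUnder (· ≤ ·) atTop (norm ∘ fun n ↦ ((q n - p n : ℝ) : ℂ)) := by
    refine ⟨1, ?_⟩
    rw [eventually_map]
    filter_upwards [eventually_binomialStd hp] with n ⟨hpn, _⟩
    rw [Function.comp_apply, Complex.norm_real, Real.norm_eq_abs, abs_le]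
    constructor <;> linarith [hpn.1, hpn.2, (hq n).1, (hq n).2]
  have h := (tendsto_bernoulliCharFun_self hp s).add
    ((tendsto_bernoulliCharFunSlope hp s).zero_mul_isBoundedUnder_le dev_bounded)
  rw [add_zero] at h
  refine h.congr fun n ↦ ?_
  rw [bernoulliCharFun_eq_add_slope (p n) (q n)]
  push_cast
  ring

end Scaling

/-- The law of `Z + μ(U)`, where `Z` is standard normal and `U` is independent of `Z` with law
`π`. -/
def limitLaw {X : Type*} [MeasurableSpace X] (π : Measure X) (μ : X → ℝ) : Measure ℝ :=
  ((gaussianReal 0 1).prod π).map fun z ↦ z.1 + μ z.2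

section LimitLaw

variable {X : Type*} [MeasurableSpace X] {π : Measure X} {μ : X → ℝ} (hμ : Measurable μ)

include hμ

theorem isProbabilityMeasure_limitLaw [IsProbabilityMeasure π] :
    IsProbabilityMeasure (limitLaw π μ) :=
  Measure.isProbabilityMeasure_map (by fun_prop)

theorem nullSingletonClass_limitLaw [SFinite π] : NullSingletonClass (limitLaw π μ) where
  measure_singleton x := by
    have h_meas : Measurable fun z : ℝ × X ↦ z.1 + μ z.2 := by fun_prop
    have fiber_eq (y : X) : (fun g ↦ (g, y)) ⁻¹' ((fun z : ℝ × X ↦ z.1 + μ z.2) ⁻¹' {x}) =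
        {x - μ y} := by
      ext g
      simp [eq_sub_iff_add_eq]
    have := nullSingletonClass_gaussianReal (μ := 0) one_ne_zero
    rw [limitLaw, Measure.map_apply h_meas (measurableSet_singleton x),
      Measure.prod_apply_symm (h_meas (measurableSet_singleton x))]
    simp only [fiber_eq, measure_singleton, lintegral_zero]

theorem charFun_limitLaw [SFinite π] (t : ℝ) :
    charFun (limitLaw π μ) t = ∫ x, charFun (gaussianReal (μ x) 1) t ∂π := by
  rw [charFun_apply_real, limitLaw, integral_map (by fun_prop) (by fun_prop)]
  have exp_add (z : ℝ × X) : Complex.exp (t * ((z.1 + μ z.2 : ℝ) : ℂ) * Complex.I) =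
      Complex.exp (t * z.1 * Complex.I) * Complex.exp (t * μ z.2 * Complex.I) := by
    rw [← Complex.exp_add]
    push_cast
    ring_nf
  simp only [exp_add, charFun_gaussianReal]
  rw [integral_prod_mul (fun g : ℝ ↦ Complex.exp (t * g * Complex.I))
    (fun x ↦ Complex.exp (t * μ x * Complex.I)), ← charFun_apply_real, charFun_gaussianReal,
    ← integral_const_mul]
  simp [← Complex.exp_add, sub_eq_neg_add]

end LimitLaw

theorem tendsto_pow_exp_of_tendsto_mul_sub_one {z : ℕ → ℂ} {c : ℂ}
    (hz : Tendsto (fun n : ℕ ↦ (n : ℂ) * (z n - 1)) atTop (nhds c)) (m : ℕ) :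
    Tendsto (fun n ↦ z (n + m) ^ n) atTop (nhds (Complex.exp c)) := by
  have sub_one_tendsto : Tendsto (fun n ↦ z n - 1) atTop (nhds 0) := by
    have h := (tendsto_inv_atTop_nhds_zero_nat (𝕜 := ℂ)).mul hz
    rw [zero_mul] at h
    refine h.congr' ?_
    filter_upwards [eventually_ne_atTop 0] with n hn
    rw [inv_mul_cancel_left₀ (Nat.cast_ne_zero.2 hn)]
  have shifted := (hz.sub (sub_one_tendsto.const_mul (m : ℂ))).comp (tendsto_add_atTop_nat m)
  rw [mul_zero, sub_zero] at shifted
  simpa using Complex.tendsto_one_add_pow_exp_of_tendsto (g := fun n ↦ z (n + m) - 1)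
    (shifted.congr fun n ↦ by simp only [Function.comp_apply]; push_cast; ring)

/-- A sequence of graphons that is close to the constant `p n` on the scale of the binomial
fluctuations: the degree variance diverges, the row-wise mean square deviations are `o(p (1 - p))`,
and the normalized mean degree of a node at `x` has excess tending to `μ x`. -/
structure IsAsymptoticallyHomogeneous {X : Type*} [MeasurableSpace X] (π : Measure X)
    (W : ℕ → X → X → ℝ) (p : ℕ → ℝ) (μ : X → ℝ) : Prop where
  isGraphon : ∀ n, IsGraphon (W n)
  tendsto_variance : Tendsto (fun n : ℕ ↦ n * p n * (1 - p n)) atTop atTop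
  tendsto_integral_sq : ∀ x, Tendsto
    (fun n ↦ (∫ v, (W n x v - p n) ^ 2 ∂π) / (p n * (1 - p n))) atTop (nhds 0)
  tendsto_integral : ∀ x, Tendsto
    (fun n : ℕ ↦ √(n / (p n * (1 - p n))) * ∫ v, (W n x v - p n) ∂π) atTop (nhds (μ x))

section Deviations

variable {X : Type*} [MeasurableSpace X] {W : X → X → ℝ} {π : Measure X}

theorem IsGraphon.memLp_sub [IsFiniteMeasure π] (hW : IsGraphon W) (p : ℝ) (x : X) :
    MemLp (fun v ↦ W x v - p) 2 π := by
  refine (MemLp.of_bound (C := 1) (hW.measurable_comp₂ measurable_const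
    measurable_id).aestronglyMeasurable (ae_of_all _ fun v ↦ ?_)).sub (memLp_const p)
  rw [id, Real.norm_of_nonneg (hW.mem_Icc x v).1]
  exact (hW.mem_Icc x v).2

theorem IsGraphon.integrable_sub_mul_sub [IsFiniteMeasure π] (hW : IsGraphon W) (p : ℝ) (x y : X) :
    Integrable (fun v ↦ (W x v - p) * (W y v - p)) π :=
  (hW.memLp_sub p x).integrable_mul (hW.memLp_sub p y)

/-- Both factors of the integrand are affine in `W`, so only the means of its deviations from `p`
and their cross moment enter. -/
theorem thirdNodeCharFun_eq [IsProbabilityMeasure π] (hW : IsGraphon W) (p s t : ℝ) (x y : X) :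
    thirdNodeCharFun W π p s t (x, y) =
      bernoulliCharFun p p s * bernoulliCharFun p p t +
      (∫ v, (W x v - p) ∂π : ℝ) * (bernoulliCharFunSlope p s * bernoulliCharFun p p t) +
      (∫ v, (W y v - p) ∂π : ℝ) * (bernoulliCharFun p p s * bernoulliCharFunSlope p t) +
      (∫ v, (W x v - p) * (W y v - p) ∂π : ℝ) *
        (bernoulliCharFunSlope p s * bernoulliCharFunSlope p t) := by
  have expand (v : X) : bernoulliCharFun p (W x v) s * bernoulliCharFun p (W y v) t =
      bernoulliCharFun p p s * bernoulliCharFun p p t +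
      (W x v - p : ℝ) * (bernoulliCharFunSlope p s * bernoulliCharFun p p t) +
      (W y v - p : ℝ) * (bernoulliCharFun p p s * bernoulliCharFunSlope p t) +
      ((W x v - p) * (W y v - p) : ℝ) *
        (bernoulliCharFunSlope p s * bernoulliCharFunSlope p t) := by
    rw [bernoulliCharFun_eq_add_slope p (W x v), bernoulliCharFun_eq_add_slope p (W y v)]
    push_cast
    ring
  have int_const := integrable_const (μ := π) (bernoulliCharFun p p s * bernoulliCharFun p p t)
  have int_mul_const {f : X → ℝ} (hf : Integrable f π) (c : ℂ) :
      Integrable (fun v ↦ (f v : ℂ) * c) π := hf.ofReal.mul_const c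
  have int_x := int_mul_const ((hW.memLp_sub p x).integrable one_le_two)
    (bernoulliCharFunSlope p s * bernoulliCharFun p p t)
  have int_y := int_mul_const ((hW.memLp_sub p y).integrable one_le_two)
    (bernoulliCharFun p p s * bernoulliCharFunSlope p t)
  have int_xy := int_mul_const (hW.integrable_sub_mul_sub p x y)
    (bernoulliCharFunSlope p s * bernoulliCharFunSlope p t)
  simp only [thirdNodeCharFun, expand]
  rw [integral_add ((int_const.fun_add int_x).fun_add int_y) int_xy,
    integral_add (int_const.fun_add int_x) int_y, integral_add int_const int_x]
  simp only [integral_mul_const, integral_complex_ofReal, integral_const, probReal_univ, one_smul]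

end Deviations

namespace IsAsymptoticallyHomogeneous

variable {X : Type*} [MeasurableSpace X] {W : ℕ → X → X → ℝ} {π : Measure X} {p : ℕ → ℝ}
  {μ : X → ℝ} (h : IsAsymptoticallyHomogeneous π W p μ)

include h

theorem measurable_limit [SFinite π] : Measurable μ := by
  refine measurable_of_tendsto_metrizable (fun n ↦ ?_) (tendsto_pi_nhds.2 h.tendsto_integral)
  have dev_meas : StronglyMeasurable (Function.uncurry fun x v ↦ W n x v - p n) :=
    ((h.isGraphon n).measurable.sub_const _).stronglyMeasurable
  exact (dev_meas.integral_prod_right (ν := π)).measurable.const_mul _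

theorem tendsto_mul_integral_sub (x : X) :
    Tendsto (fun n : ℕ ↦ n / binomialStd (p n) n * ∫ v, (W n x v - p n) ∂π) atTop
      (nhds (μ x)) := by
  refine (h.tendsto_integral x).congr' ?_
  filter_upwards [eventually_ne_atTop 0] with n hn
  have hn' : (n : ℝ) ≠ 0 := Nat.cast_ne_zero.2 hn
  have std_eq : √(n / (p n * (1 - p n))) = n / binomialStd (p n) n := by
    rw [binomialStd, mul_assoc, ← mul_div_mul_left _ _ hn', ← sq, Real.sqrt_div (sq_nonneg _),
      Real.sqrt_sq n.cast_nonneg]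
  rw [std_eq]

variable [IsProbabilityMeasure π]

theorem tendsto_mul_integral_sub_mul_sub (x y : X) :
    Tendsto (fun n : ℕ ↦ n / binomialStd (p n) n ^ 2 * ∫ v, (W n x v - p n) * (W n y v - p n) ∂π)
      atTop (nhds 0) := by
  have bound_tendsto := ((h.tendsto_integral_sq x).add (h.tendsto_integral_sq y)).div_const 2
  rw [add_zero, zero_div] at bound_tendsto
  refine squeeze_zero_norm' ?_ bound_tendsto
  filter_upwards [eventually_binomialStd h.tendsto_variance, eventually_gt_atTop 0] with
    n ⟨hpn, _, hσ_sq⟩ hn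
  have hvar : 0 < p n * (1 - p n) := mul_pos hpn.1 (sub_pos.2 hpn.2)
  have int_sq (x : X) : Integrable (fun v ↦ (W n x v - p n) ^ 2) π := by
    simpa only [sq] using (h.isGraphon n).integrable_sub_mul_sub (π := π) (p n) x x
  have two_mul_le : |∫ v, (W n x v - p n) * (W n y v - p n) ∂π| ≤
      ((∫ v, (W n x v - p n) ^ 2 ∂π) + ∫ v, (W n y v - p n) ^ 2 ∂π) / 2 := by
    rw [← integral_add (int_sq x) (int_sq y), ← integral_div]
    refine abs_integral_le_integral_abs.trans (integral_mono
      ((h.isGraphon n).integrable_sub_mul_sub (π := π) (p n) x y).abs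
      (((int_sq x).add (int_sq y)).div_const 2) fun v ↦ ?_)
    rw [abs_mul]
    have := two_mul_le_add_sq |W n x v - p n| |W n y v - p n|
    simp only [sq_abs] at this
    linarith
  have scale_eq : (n : ℝ) / binomialStd (p n) n ^ 2 = (p n * (1 - p n))⁻¹ := by
    rw [hσ_sq, div_mul_eq_div_div, div_self (by positivity), one_div]
  rw [norm_mul, Real.norm_eq_abs, Real.norm_eq_abs, scale_eq, abs_of_pos (inv_pos.2 hvar)]
  refine (mul_le_mul_of_nonneg_left two_mul_le (inv_pos.2 hvar).le).trans_eq ?_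
  ring

theorem tendsto_mul_thirdNodeCharFun_sub_one (s t : ℝ) (x y : X) :
    Tendsto (fun n : ℕ ↦ (n : ℂ) * (thirdNodeCharFun (W n) π (p n) (s / binomialStd (p n) n)
      (t / binomialStd (p n) n) (x, y) - 1)) atTop
      (nhds ((s * μ x * Complex.I - s ^ 2 / 2) + (t * μ y * Complex.I - t ^ 2 / 2))) := by
  have hp := h.tendsto_variance
  have base_s := tendsto_mul_bernoulliCharFun_self_sub_one hp s
  have base_t := tendsto_mul_bernoulliCharFun_self_sub_one hp t
  have one_s := tendsto_bernoulliCharFun_self hp s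
  have one_t := tendsto_bernoulliCharFun_self hp t
  have slope_s := tendsto_mul_bernoulliCharFunSlope hp s
  have slope_t := tendsto_mul_bernoulliCharFunSlope hp t
  have mean_x := (Complex.continuous_ofReal.tendsto _).comp (h.tendsto_mul_integral_sub x)
  have mean_y := (Complex.continuous_ofReal.tendsto _).comp (h.tendsto_mul_integral_sub y)
  have cross := (Complex.continuous_ofReal.tendsto _).comp (h.tendsto_mul_integral_sub_mul_sub x y)
  have total := ((((base_s.mul one_t).add base_t).add (mean_x.mul (slope_s.mul one_t))).add
    (mean_y.mul (one_s.mul slope_t))).add (cross.mul (slope_s.mul slope_t))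
  refine (total.congr' ?_).trans (le_of_eq ?_)
  · filter_upwards [eventually_binomialStd hp] with n ⟨_, hσ, _⟩
    have hσ' : (binomialStd (p n) n : ℂ) ≠ 0 := Complex.ofReal_ne_zero.2 hσ.ne'
    rw [thirdNodeCharFun_eq (h.isGraphon n)]
    simp only [Function.comp_apply]
    push_cast
    field_simp
    ring
  · push_cast
    ring_nf

end IsAsymptoticallyHomogeneous

/-- The degree of node `i`, standardized by the mean and the standard deviation of the binomial
distribution with parameters `n` and `p`. -/
def normalizedDegree (p : ℝ) {n : ℕ} (a : Fin n → Fin n → Bool) (i : Fin n) : ℝ :=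
  (degree a i - n * p) / binomialStd p n

/-- The joint law of the normalized degrees of nodes `i` and `j`. It lives on `WithLp 2 (ℝ × ℝ)`
because `charFun` needs an inner product. -/
def degreePairLaw {X : Type*} [MeasurableSpace X] (W : X → X → ℝ) (π : Measure X) (p : ℝ) {n : ℕ}
    (i j : Fin n) : Measure (WithLp 2 (ℝ × ℝ)) :=
  (graphonLaw W π n).map fun a ↦ WithLp.toLp 2 (normalizedDegree p a i, normalizedDegree p a j)

section DegreePairLaw

variable {X : Type*} [MeasurableSpace X] {W : X → X → ℝ} (hW : IsGraphon W) (π : Measure X)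
  [IsProbabilityMeasure π] (p : ℝ) {n : ℕ}

include hW

theorem isProbabilityMeasure_degreePairLaw (i j : Fin n) :
    IsProbabilityMeasure (degreePairLaw W π p i j) :=
  have := isProbabilityMeasure_graphonLaw (π := π) (n := n) hW
  Measure.isProbabilityMeasure_map Measurable.of_discrete.aemeasurable

theorem charFun_degreePairLaw (i : Fin (n + 2)) (j : Fin (n + 1)) (v : WithLp 2 (ℝ × ℝ)) :
    charFun (degreePairLaw W π p i (i.succAbove j)) v =
      Complex.exp ((-((v.fst + v.snd) / binomialStd p (n + 2) * p) : ℝ) * Complex.I) *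
        ∫ z, bernoulliCharFun p (W z.1 z.2) ((v.fst + v.snd) / binomialStd p (n + 2)) *
          thirdNodeCharFun W π p (v.fst / binomialStd p (n + 2))
            (v.snd / binomialStd p (n + 2)) z ^ n ∂(π.prod π) := by
  rw [add_div, ← integral_exp_degree_graphonLaw hW p _ _ π i j, ← integral_const_mul,
    charFun_apply, degreePairLaw, integral_map Measurable.of_discrete.aemeasurable (by fun_prop)]
  refine integral_congr_ae (ae_of_all _ fun a ↦ ?_)
  simp only
  rw [← Complex.exp_add, ← add_mul, ← Complex.ofReal_add, WithLp.prod_inner_apply]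
  simp only [normalizedDegree, RCLike.inner_apply, conj_trivial, WithLp.ofLp_fst,
    WithLp.ofLp_snd]
  push_cast
  ring_nf

theorem degreePairLaw_eq_of_ne {i j i' j' : Fin (n + 2)} (hij : i ≠ j) (hij' : i' ≠ j') :
    degreePairLaw W π p i j = degreePairLaw W π p i' j' := by
  obtain ⟨k, rfl⟩ := Fin.exists_succAbove_eq hij.symm
  obtain ⟨k', rfl⟩ := Fin.exists_succAbove_eq hij'.symm
  have := isProbabilityMeasure_degreePairLaw hW π p i (i.succAbove k)
  have := isProbabilityMeasure_degreePairLaw hW π p i' (i'.succAbove k')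
  refine Measure.ext_of_charFun (funext fun v ↦ ?_)
  rw [charFun_degreePairLaw hW, charFun_degreePairLaw hW]

end DegreePairLaw

namespace IsAsymptoticallyHomogeneous

variable {X : Type*} [MeasurableSpace X] {W : ℕ → X → X → ℝ} {π : Measure X}
  [IsProbabilityMeasure π] {p : ℕ → ℝ} {μ : X → ℝ} (h : IsAsymptoticallyHomogeneous π W p μ)

include h

theorem tendsto_mul_thirdNodeCharFun_pow (s t : ℝ) (z : X × X) :
    Tendsto (fun n : ℕ ↦
      bernoulliCharFun (p (n + 2)) (W (n + 2) z.1 z.2)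
        ((s + t) / binomialStd (p (n + 2)) (n + 2)) *
      thirdNodeCharFun (W (n + 2)) π (p (n + 2)) (s / binomialStd (p (n + 2)) (n + 2))
        (t / binomialStd (p (n + 2)) (n + 2)) z ^ n) atTop
      (nhds (charFun (gaussianReal (μ z.1) 1) s * charFun (gaussianReal (μ z.2) 1) t)) := by
  have pair_edge := (tendsto_bernoulliCharFun h.tendsto_variance
    (fun n ↦ (h.isGraphon n).mem_Icc z.1 z.2) (s + t)).comp (tendsto_add_atTop_nat 2)
  have third_nodes := tendsto_pow_exp_of_tendsto_mul_sub_one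
    (h.tendsto_mul_thirdNodeCharFun_sub_one s t z.1 z.2) 2
  rw [charFun_gaussianReal, charFun_gaussianReal, ← Complex.exp_add]
  simpa [Function.comp_def] using pair_edge.mul third_nodes

theorem tendsto_integral_mul_thirdNodeCharFun_pow (s t : ℝ) :
    Tendsto (fun n : ℕ ↦ ∫ z,
      bernoulliCharFun (p (n + 2)) (W (n + 2) z.1 z.2)
        ((s + t) / binomialStd (p (n + 2)) (n + 2)) *
      thirdNodeCharFun (W (n + 2)) π (p (n + 2)) (s / binomialStd (p (n + 2)) (n + 2))
        (t / binomialStd (p (n + 2)) (n + 2)) z ^ n ∂(π.prod π)) atTop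
      (nhds (charFun (limitLaw π μ) s * charFun (limitLaw π μ) t)) := by
  rw [charFun_limitLaw h.measurable_limit, charFun_limitLaw h.measurable_limit,
    ← integral_prod_mul]
  refine tendsto_integral_of_dominated_convergence (fun _ ↦ 1) (fun n ↦ ?_) (integrable_const _)
    (fun n ↦ ae_of_all _ fun z ↦ ?_) (ae_of_all _ (h.tendsto_mul_thirdNodeCharFun_pow s t))
  · exact (((h.isGraphon _).measurable_bernoulliCharFun _ measurable_fst measurable_snd _).mul
      ((measurable_thirdNodeCharFun (h.isGraphon _) _ _ _ π).pow_const n)).aestronglyMeasurable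
  · rw [norm_mul, norm_pow]
    exact mul_le_one₀ (norm_bernoulliCharFun_le ((h.isGraphon _).mem_Icc _ _) _ _) (by positivity)
      (pow_le_one₀ (norm_nonneg _) (norm_thirdNodeCharFun_le (h.isGraphon _) _ _ _ π z))

theorem tendsto_charFun_degreePairLaw (v : WithLp 2 (ℝ × ℝ)) :
    Tendsto (fun n : ℕ ↦
        charFun (degreePairLaw (W (n + 2)) π (p (n + 2)) (0 : Fin (n + 2)) 1) v) atTop
      (nhds (charFun (limitLaw π μ) v.fst * charFun (limitLaw π μ) v.snd)) := by
  have phase : Tendsto (fun n : ℕ ↦ Complex.exp ((-((v.fst + v.snd) /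
      binomialStd (p (n + 2)) (n + 2) * p (n + 2)) : ℝ) * Complex.I)) atTop (nhds 1) := by
    have h_exp : Continuous fun x : ℝ ↦ Complex.exp ((-x : ℝ) * Complex.I) := by fun_prop
    simpa [Function.comp_def] using (h_exp.tendsto 0).comp
      ((tendsto_div_binomialStd_mul_self h.tendsto_variance (v.fst + v.snd)).comp
        (tendsto_add_atTop_nat 2))
  rw [← one_mul (charFun _ _ * _)]
  refine (phase.mul (h.tendsto_integral_mul_thirdNodeCharFun_pow v.fst v.snd)).congr fun n ↦ ?_
  exact (charFun_degreePairLaw (h.isGraphon _) π _ 0 0 v).symm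

end IsAsymptoticallyHomogeneous

theorem tendsto_measure_prod_of_tendsto_charFun {E F : Type*}
    [NormedAddCommGroup E] [InnerProductSpace ℝ E] [FiniteDimensional ℝ E] [MeasurableSpace E]
    [BorelSpace E] [NormedAddCommGroup F] [InnerProductSpace ℝ F] [FiniteDimensional ℝ F]
    [MeasurableSpace F] [BorelSpace F] {ρ : ℕ → Measure (WithLp 2 (E × F))}
    (hρ : ∀ n, IsProbabilityMeasure (ρ n)) {ν₁ : Measure E} {ν₂ : Measure F}
    [IsProbabilityMeasure ν₁] [IsProbabilityMeasure ν₂]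
    (h : ∀ v, Tendsto (fun n ↦ charFun (ρ n) v) atTop
      (nhds (charFun ν₁ v.fst * charFun ν₂ v.snd)))
    {A : Set E} {B : Set F} (hA : ν₁ (frontier A) = 0) (hB : ν₂ (frontier B) = 0) :
    Tendsto (fun n ↦ ρ n (WithLp.ofLp ⁻¹' A ×ˢ B)) atTop (nhds (ν₁ A * ν₂ B)) := by
  have map_toLp_apply (S : Set (E × F)) :
      (ν₁.prod ν₂).map (WithLp.toLp 2) (WithLp.ofLp ⁻¹' S) = ν₁.prod ν₂ S := by
    rw [← MeasurableEquiv.coe_toLp, MeasurableEquiv.map_apply]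
    rfl
  have frontier_null :
      (ν₁.prod ν₂).map (WithLp.toLp 2) (frontier (WithLp.ofLp ⁻¹' A ×ˢ B)) = 0 := by
    have frontier_eq : WithLp.ofLp ⁻¹' frontier (A ×ˢ B) = frontier (WithLp.ofLp ⁻¹' A ×ˢ B) :=
      (WithLp.homeomorphProd 2 E F).preimage_frontier _
    rw [← frontier_eq, map_toLp_apply, frontier_prod_eq]
    exact measure_union_null (by simp [hB]) (by simp [hA])
  let ρ' (n : ℕ) : ProbabilityMeasure (WithLp 2 (E × F)) := ⟨ρ n, hρ n⟩
  let ν : ProbabilityMeasure (WithLp 2 (E × F)) := ⟨(ν₁.prod ν₂).map (WithLp.toLp 2),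
    Measure.isProbabilityMeasure_map (by fun_prop)⟩
  have weak : Tendsto ρ' atTop (nhds ν) :=
    ProbabilityMeasure.tendsto_of_tendsto_charFun fun v ↦ by
      simpa only [ν, ρ', ProbabilityMeasure.coe_mk, charFun_prod, WithLp.ofLp_fst,
        WithLp.ofLp_snd] using h v
  have := ProbabilityMeasure.tendsto_measure_of_null_frontier_of_tendsto' weak frontier_null
  simpa only [ν, ρ', ProbabilityMeasure.coe_mk, map_toLp_apply, Measure.prod_prod] using this

theorem degreePairLaw_preimage_prod {X : Type*} [MeasurableSpace X] (W : X → X → ℝ)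
    (π : Measure X) (p : ℝ) {n : ℕ} (i j : Fin n) {A B : Set ℝ} (hA : MeasurableSet A)
    (hB : MeasurableSet B) :
    degreePairLaw W π p i j (WithLp.ofLp ⁻¹' A ×ˢ B) =
      graphonLaw W π n {a | normalizedDegree p a i ∈ A ∧ normalizedDegree p a j ∈ B} := by
  rw [degreePairLaw, Measure.map_apply Measurable.of_discrete
    (WithLp.measurable_ofLp _ _ (hA.prod hB))]
  rfl

section Exchangeable

variable {X : Type*} [MeasurableSpace X] {W : X → X → ℝ} (hW : IsGraphon W) (π : Measure X)
  [IsProbabilityMeasure π] (p : ℝ) {n : ℕ} {A : Set ℝ} (hA : MeasurableSet A)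

include hW hA

theorem graphonLaw_normalizedDegree_mem_eq (i : Fin (n + 2)) :
    graphonLaw W π (n + 2) {a | normalizedDegree p a i ∈ A} =
      degreePairLaw W π p (0 : Fin (n + 2)) 1 (WithLp.ofLp ⁻¹' A ×ˢ Set.univ) := by
  obtain ⟨j, hj⟩ := exists_ne i
  rw [degreePairLaw_eq_of_ne hW π p Fin.zero_ne_one hj.symm,
    degreePairLaw_preimage_prod W π p i j hA MeasurableSet.univ]
  simp only [Set.mem_univ, and_true]

theorem graphonLaw_normalizedDegree_mem_inter_eq {B : Set ℝ} (hB : MeasurableSet B)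
    {i j : Fin (n + 2)} (hij : i ≠ j) :
    graphonLaw W π (n + 2) ({a | normalizedDegree p a i ∈ A} ∩ {a | normalizedDegree p a j ∈ B}) =
      degreePairLaw W π p (0 : Fin (n + 2)) 1 (WithLp.ofLp ⁻¹' A ×ˢ B) := by
  rw [degreePairLaw_eq_of_ne hW π p Fin.zero_ne_one hij,
    degreePairLaw_preimage_prod W π p i j hA hB]
  rfl

end Exchangeable

theorem IsAsymptoticallyHomogeneous.tendsto_degreePairLaw_prod {X : Type*} [MeasurableSpace X]
    {W : ℕ → X → X → ℝ} {π : Measure X} [IsProbabilityMeasure π] {p : ℕ → ℝ} {μ : X → ℝ}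
    (h : IsAsymptoticallyHomogeneous π W p μ) {A B : Set ℝ}
    (hA : limitLaw π μ (frontier A) = 0) (hB : limitLaw π μ (frontier B) = 0) :
    Tendsto (fun n : ℕ ↦ degreePairLaw (W (n + 2)) π (p (n + 2)) (0 : Fin (n + 2)) 1
      (WithLp.ofLp ⁻¹' A ×ˢ B)) atTop (nhds (limitLaw π μ A * limitLaw π μ B)) :=
  have := isProbabilityMeasure_limitLaw (π := π) h.measurable_limit
  tendsto_measure_prod_of_tendsto_charFun
    (fun _ ↦ isProbabilityMeasure_degreePairLaw (h.isGraphon _) π _ 0 1)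
    h.tendsto_charFun_degreePairLaw hA hB

section EmpiricalFrequency

/-- The proportion of the events `E i` that occur. -/
def empiricalFrequency {Ω ι : Type*} [Fintype ι] (E : ι → Set Ω) (ω : Ω) : ℝ :=
  (∑ i, (E i).indicator 1 ω) / Fintype.card ι

variable {Ω ι : Type*} [MeasurableSpace Ω] {Q : Measure Ω}

theorem memLp_indicator_one [IsFiniteMeasure Q] {A : Set Ω} (hA : MeasurableSet A) :
    MemLp (A.indicator (1 : Ω → ℝ)) 2 Q :=
  (memLp_const 1).indicator hA

theorem covariance_indicator_one [IsProbabilityMeasure Q] {A B : Set Ω} (hA : MeasurableSet A)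
    (hB : MeasurableSet B) :
    cov[A.indicator (1 : Ω → ℝ), B.indicator 1; Q] = Q.real (A ∩ B) - Q.real A * Q.real B := by
  rw [covariance_eq_sub (memLp_indicator_one hA) (memLp_indicator_one hB),
    ← Set.inter_indicator_one, integral_indicator_one (hA.inter hB), integral_indicator_one hA,
    integral_indicator_one hB]

variable [Fintype ι] {E : ι → Set Ω} (hE : ∀ i, MeasurableSet (E i))

include hE

theorem memLp_empiricalFrequency [IsFiniteMeasure Q] : MemLp (empiricalFrequency E) 2 Q := by
  have h := (memLp_finsetSum univ fun i _ ↦ memLp_indicator_one (Q := Q) (hE i)).const_mul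
    (Fintype.card ι : ℝ)⁻¹
  simp only [← div_eq_inv_mul] at h
  exact h

variable [Nonempty ι] [IsProbabilityMeasure Q] {a b : ℝ} (ha : ∀ i, Q.real (E i) = a)

include ha

theorem integral_empiricalFrequency : Q[empiricalFrequency E] = a := by
  simp only [empiricalFrequency]
  rw [integral_div, integral_finsetSum _ fun i _ ↦
    (memLp_indicator_one (hE i)).integrable one_le_two]
  simp only [integral_indicator_one (hE _), ha, Finset.sum_const, card_univ, nsmul_eq_mul]
  exact mul_div_cancel_left₀ a (Nat.cast_ne_zero.2 Fintype.card_ne_zero)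

variable (hb : ∀ i j, i ≠ j → Q.real (E i ∩ E j) = b)

include hb

theorem variance_empiricalFrequency :
    Var[empiricalFrequency E; Q] = (a - b) / Fintype.card ι + (b - a ^ 2) := by
  classical
  have cov_eq (i j : ι) : cov[(E i).indicator (1 : Ω → ℝ), (E j).indicator 1; Q] =
      (if i = j then a - b else 0) + (b - a ^ 2) := by
    rw [covariance_indicator_one (hE i) (hE j), ha, ha]
    split_ifs with hij
    · rw [hij, Set.inter_self, ha]
      ring
    · rw [hb i j hij]
      ring
  have hN : (Fintype.card ι : ℝ) ≠ 0 := Nat.cast_ne_zero.2 Fintype.card_ne_zero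
  have freq_eq : empiricalFrequency E = fun ω ↦
      (Fintype.card ι : ℝ)⁻¹ * ∑ i, (E i).indicator 1 ω := by
    simp only [← div_eq_inv_mul]
    rfl
  rw [freq_eq, variance_const_mul, variance_fun_sum fun i ↦ memLp_indicator_one (hE i)]
  simp only [cov_eq, Finset.sum_add_distrib, Finset.sum_ite_eq, mem_univ, if_true,
    Finset.sum_const, card_univ, nsmul_eq_mul]
  field_simp

end EmpiricalFrequency

theorem tendsto_measure_abs_empiricalFrequency_sub {Ω ι : ℕ → Type*}
    [∀ n, MeasurableSpace (Ω n)] {Q : ∀ n, Measure (Ω n)} [∀ n, Fintype (ι n)]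
    (hι : Tendsto (fun n ↦ Fintype.card (ι n)) atTop atTop) {E : ∀ n, ι n → Set (Ω n)}
    (hQ : ∀ n, IsProbabilityMeasure (Q n)) (hE : ∀ n i, MeasurableSet (E n i)) {a b : ℕ → ℝ}
    (ha : ∀ n i, (Q n).real (E n i) = a n)
    (hb : ∀ n i j, i ≠ j → (Q n).real (E n i ∩ E n j) = b n) {m : ℝ}
    (ha_lim : Tendsto a atTop (nhds m)) (hb_lim : Tendsto b atTop (nhds (m ^ 2))) {δ : ℝ}
    (hδ : 0 < δ) :
    Tendsto (fun n ↦ Q n {ω | δ ≤ |empiricalFrequency (E n) ω - m|}) atTop (nhds 0) := by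
  have variance_tendsto : Tendsto (fun n ↦ ((a n - b n) / Fintype.card (ι n) +
      (b n - a n ^ 2)) / (δ / 2) ^ 2) atTop (nhds 0) := by
    have h := (((ha_lim.sub hb_lim).div_atTop (tendsto_natCast_atTop_atTop.comp hι)).add
      (hb_lim.sub (ha_lim.pow 2))).div_const ((δ / 2) ^ 2)
    rwa [sub_self, add_zero, zero_div] at h
  refine tendsto_of_tendsto_of_tendsto_of_le_of_le' tendsto_const_nhds
    (ENNReal.ofReal_zero ▸ ENNReal.tendsto_ofReal variance_tendsto)
    (Eventually.of_forall fun _ ↦ zero_le) ?_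
  filter_upwards [hι.eventually_ge_atTop 1,
    ha_lim.eventually (Metric.ball_mem_nhds m (half_pos hδ))] with n hcard ha_near
  have := Fintype.card_pos_iff.1 hcard
  have := hQ n
  have chebyshev := meas_ge_le_variance_div_sq (memLp_empiricalFrequency (Q := Q n) (hE n))
    (half_pos hδ)
  rw [variance_empiricalFrequency (hE n) (ha n) (hb n),
    integral_empiricalFrequency (hE n) (ha n)] at chebyshev
  refine (measure_mono fun ω (hω : δ ≤ _) ↦ ?_).trans chebyshev
  have triangle := abs_sub_le (empiricalFrequency (E n) ω) (a n) m
  rw [Real.dist_eq] at ha_near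
  change δ / 2 ≤ |empiricalFrequency (E n) ω - a n|
  linarith

section UniformConvergence

theorem exists_finset_forall_exists_dist_lt {α β : Type*} [PseudoMetricSpace β]
    {s : Set β} (hs : TotallyBounded s) {F : α → β} (hF : s ⊆ Set.range F) {ε : ℝ} (hε : 0 < ε) :
    ∃ T : Finset α, ∀ y ∈ s, ∃ t ∈ T, dist (F t) y < ε := by
  classical
  obtain ⟨N, N_subset, N_finite, hN⟩ := Metric.finite_approx_of_totallyBounded hs ε hε
  lift N to Finset β using N_finite
  obtain ⟨T, -, rfl⟩ := Finset.subset_set_image_iff.1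
    (N_subset.trans (hF.trans Set.image_univ.ge))
  refine ⟨T, fun y hy ↦ ?_⟩
  simpa [dist_comm y] using hN hy

theorem abs_sub_le_of_monotone {α : Type*} [LinearOrder α] {F G : α → ℝ} (hF : Monotone F)
    (hG : Monotone G) (hF_mem : ∀ x, F x ∈ Set.Icc (0 : ℝ) 1)
    (hG_mem : ∀ x, G x ∈ Set.Icc (0 : ℝ) 1) {T : Set α} {ε : ℝ} (hε : 0 < ε)
    (hT : ∀ y ∈ Set.Ioo (0 : ℝ) 1, ∃ t ∈ T, dist (F t) y < ε)
    (h : ∀ t ∈ T, |G t - F t| ≤ ε) (x : α) : |G x - F x| ≤ 3 * ε := by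
  obtain ⟨hF0, hF1⟩ := hF_mem x
  obtain ⟨hG0, hG1⟩ := hG_mem x
  simp only [Real.dist_eq, abs_lt] at hT
  simp only [abs_le] at h ⊢
  constructor
  · rcases le_or_gt (F x - ε) 0 with h_small | h_pos
    · linarith
    obtain ⟨t, htT, ht⟩ := hT (F x - ε) ⟨h_pos, by linarith⟩
    have := hG (hF.reflect_lt (show F t < F x by linarith)).le
    linarith [h t htT]
  · rcases le_or_gt 1 (F x + ε) with h_large | h_lt
    · linarith
    obtain ⟨t, htT, ht⟩ := hT (F x + ε) ⟨by linarith, h_lt⟩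
    have := hG (hF.reflect_lt (show F x < F t by linarith)).le
    linarith [h t htT]

variable (ν : Measure ℝ) [IsProbabilityMeasure ν] [NullSingletonClass ν]

theorem continuous_cdf : Continuous (cdf ν) := by
  refine continuous_iff_continuousAt.2 fun x ↦ ?_
  rw [(monotone_cdf ν).continuousAt_iff_leftLim_eq_rightLim, (cdf ν).rightLim_eq]
  have jump := (cdf ν).measure_singleton x
  rw [measure_cdf, measure_singleton, eq_comm, ENNReal.ofReal_eq_zero] at jump
  exact ((monotone_cdf ν).leftLim_le le_rfl).antisymm (sub_nonpos.1 jump)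

theorem Ioo_subset_range_cdf : Set.Ioo 0 1 ⊆ Set.range (cdf ν) := fun _ hy ↦
  mem_range_of_exists_le_of_exists_ge (continuous_cdf ν)
    (((tendsto_cdf_atBot ν).eventually_le_const hy.1).exists)
    (((tendsto_cdf_atTop ν).eventually_const_le hy.2).exists)

theorem tendsto_measure_lt_iSup_abs_sub_cdf {Ω : ℕ → Type*} [∀ n, MeasurableSpace (Ω n)]
    {Q : ∀ n, Measure (Ω n)} {G : ∀ n, Ω n → ℝ → ℝ} (hG : ∀ n ω, Monotone (G n ω))
    (hG_mem : ∀ n ω x, G n ω x ∈ Set.Icc (0 : ℝ) 1)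
    (h : ∀ x, ∀ δ > 0, Tendsto (fun n ↦ Q n {ω | δ ≤ |G n ω x - cdf ν x|}) atTop (nhds 0))
    {ε : ℝ} (hε : 0 < ε) :
    Tendsto (fun n ↦ Q n {ω | ε < ⨆ x, |G n ω x - cdf ν x|}) atTop (nhds 0) := by
  have hε3 : 0 < ε / 3 := by positivity
  obtain ⟨T, hT⟩ := exists_finset_forall_exists_dist_lt (totallyBounded_Ioo 0 1)
    (Ioo_subset_range_cdf ν) hε3
  have sum_tendsto := tendsto_finsetSum T fun x _ ↦ h x (ε / 3) hε3
  rw [Finset.sum_const_zero] at sum_tendsto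
  refine tendsto_of_tendsto_of_tendsto_of_le_of_le tendsto_const_nhds sum_tendsto
    (fun _ ↦ zero_le) fun n ↦ (measure_mono fun ω (hω : ε < _) ↦ ?_).trans
      (measure_biUnion_finset_le T fun x ↦ {ω | ε / 3 ≤ |G n ω x - cdf ν x|})
  by_contra h_close
  simp only [Set.mem_iUnion, Set.mem_ofPred_eq, not_exists, not_le] at h_close
  refine hω.not_ge (ciSup_le fun x ↦ ?_)
  have := abs_sub_le_of_monotone (monotone_cdf ν) (hG n ω)
    (fun x ↦ ⟨cdf_nonneg ν x, cdf_le_one ν x⟩) (hG_mem n ω) hε3 hT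
    (fun t ht ↦ (h_close t ht).le) x
  linarith

end UniformConvergence

section EmpiricalCDF

variable {n : ℕ} (a : Fin n → Fin n → Bool) (p : ℝ)

theorem empCDF_eq_empiricalFrequency (x : ℝ) :
    empCDF a p x = empiricalFrequency (fun i ↦ {a | normalizedDegree p a i ∈ Set.Iic x}) a := by
  rw [empCDF, empiricalFrequency, Fintype.card_fin, ← Finset.sum_boole]
  rfl

theorem monotone_empCDF : Monotone (empCDF a p) := fun _ _ hxy ↦ by
  unfold empCDF
  gcongr

theorem empCDF_mem_Icc (x : ℝ) : empCDF a p x ∈ Set.Icc (0 : ℝ) 1 := by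
  refine ⟨by unfold empCDF; positivity, div_le_one_of_le₀ ?_ n.cast_nonneg⟩
  exact_mod_cast (Finset.card_filter_le _ _).trans_eq (Finset.card_fin n)

end EmpiricalCDF

namespace IsAsymptoticallyHomogeneous

variable {X : Type*} [MeasurableSpace X] {W : ℕ → X → X → ℝ} {π : Measure X}
  [IsProbabilityMeasure π] {p : ℕ → ℝ} {μ : X → ℝ} (h : IsAsymptoticallyHomogeneous π W p μ)

include h

theorem tendsto_measure_abs_empCDF_sub (x : ℝ) {δ : ℝ} (hδ : 0 < δ) :
    Tendsto (fun n ↦ graphonLaw (W n) π n {a | δ ≤ |empCDF a (p n) x - cdf (limitLaw π μ) x|})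
      atTop (nhds 0) := by
  have := isProbabilityMeasure_limitLaw (π := π) h.measurable_limit
  have := nullSingletonClass_limitLaw (π := π) h.measurable_limit
  have frontier_null : limitLaw π μ (frontier (Set.Iic x)) = 0 := by
    rw [frontier_Iic, measure_singleton]
  have fst_tendsto := h.tendsto_degreePairLaw_prod frontier_null (B := Set.univ) (by simp)
  have pair_tendsto := h.tendsto_degreePairLaw_prod frontier_null frontier_null
  rw [measure_univ, mul_one] at fst_tendsto
  rw [← sq] at pair_tendsto
  rw [← tendsto_add_atTop_iff_nat 2]
  simp only [empCDF_eq_empiricalFrequency, cdf_eq_real]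
  refine tendsto_measure_abs_empiricalFrequency_sub (ι := fun n ↦ Fin (n + 2))
    (E := fun n i ↦ {a | normalizedDegree (p (n + 2)) a i ∈ Set.Iic x})
    (by simpa only [Fintype.card_fin] using tendsto_add_atTop_nat 2)
    (fun n ↦ isProbabilityMeasure_graphonLaw (h.isGraphon _)) (fun _ _ ↦ .of_discrete)
    (fun n i ↦ congrArg ENNReal.toReal
      (graphonLaw_normalizedDegree_mem_eq (h.isGraphon _) π _ measurableSet_Iic i))
    (fun n i j hij ↦ congrArg ENNReal.toReal
      (graphonLaw_normalizedDegree_mem_inter_eq (h.isGraphon _) π _ measurableSet_Iic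
        measurableSet_Iic hij))
    ((ENNReal.tendsto_toReal (measure_ne_top _ _)).comp fst_tendsto) ?_ hδ
  rw [← ENNReal.toReal_pow]
  exact (ENNReal.tendsto_toReal (by finiteness)).comp pair_tendsto

theorem tendsto_measure_lt_iSup_abs_empCDF_sub {ε : ℝ} (hε : 0 < ε) :
    Tendsto (fun n ↦ graphonLaw (W n) π n {a | ε < ⨆ x, |empCDF a (p n) x - cdf (limitLaw π μ) x|})
      atTop (nhds 0) :=
  have := isProbabilityMeasure_limitLaw (π := π) h.measurable_limit
  have := nullSingletonClass_limitLaw (π := π) h.measurable_limit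
  tendsto_measure_lt_iSup_abs_sub_cdf _ (fun n a ↦ monotone_empCDF a (p n))
    (fun n a ↦ empCDF_mem_Icc a (p n)) (fun x _ ↦ h.tendsto_measure_abs_empCDF_sub x) hε

end IsAsymptoticallyHomogeneous

section LatentPositions

theorem sum_smul_pi_eq_pi_sum {ι β α : Type*} [Fintype ι] [DecidableEq ι] [Fintype β]
    [MeasurableSpace α] (r : β → ENNReal) (ν : β → Measure α) [∀ b, SigmaFinite (ν b)]
    [SigmaFinite (∑ b, r b • ν b)] :
    ∑ l : ι → β, (∏ i, r (l i)) • Measure.pi (fun i ↦ ν (l i)) =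
      Measure.pi fun _ ↦ ∑ b, r b • ν b := by
  refine (Measure.pi_eq fun s _ ↦ ?_).symm
  have prod_sum := Finset.prod_univ_sum (fun _ : ι ↦ (Finset.univ : Finset β))
    fun i b ↦ r b * ν b (s i)
  simp only [Fintype.piFinset_univ, Finset.prod_mul_distrib] at prod_sum
  simp only [Measure.coe_finsetSum, Finset.sum_apply, Measure.smul_apply, smul_eq_mul,
    Measure.pi_pi, prod_sum]

theorem ofReal_smul_unifMeasure {a b : ℝ} (hab : a < b) :
    ENNReal.ofReal (b - a) • unifMeasure a b = volume.restrict (Set.Ioo a b) := by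
  rw [unifMeasure, smul_smul, ENNReal.mul_inv_cancel (by simpa using hab) ENNReal.ofReal_ne_top,
    one_smul]

theorem isProbabilityMeasure_unifMeasure {a b : ℝ} (hab : a < b) :
    IsProbabilityMeasure (unifMeasure a b) where
  measure_univ := by
    simp [unifMeasure, ENNReal.inv_mul_cancel, hab]

variable {κ : ℝ} (hκ0 : 0 < κ) (hκ1 : κ < 1)

include hκ0 hκ1

theorem isProbabilityMeasure_latentLaw (b : Bool) : IsProbabilityMeasure (latentLaw κ b) := by
  cases b
  exacts [isProbabilityMeasure_unifMeasure hκ1, isProbabilityMeasure_unifMeasure hκ0]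

theorem ofReal_smul_unifMeasure_add :
    ENNReal.ofReal κ • unifMeasure 0 κ + ENNReal.ofReal (1 - κ) • unifMeasure κ 1 =
      volume.restrict (Set.Icc 0 1) := by
  have left := ofReal_smul_unifMeasure hκ0
  rw [sub_zero] at left
  rw [left, ofReal_smul_unifMeasure hκ1, Measure.restrict_congr_set Ioo_ae_eq_Ico,
    Measure.restrict_congr_set (Ioo_ae_eq_Icc (a := κ)),
    ← Measure.restrict_union _ measurableSet_Icc, Set.Ico_union_Icc_eq_Icc hκ0.le hκ1.le]
  exact Set.disjoint_left.2 fun _ h h' ↦ h'.1.not_gt h.2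

theorem sum_labelMass_smul_pi_latentLaw (n : ℕ) :
    ∑ l : Fin n → Bool, ENNReal.ofReal (labelMass κ l) • Measure.pi (fun i ↦ latentLaw κ (l i)) =
      Measure.pi fun _ ↦ volume.restrict (Set.Icc 0 1) := by
  have := isProbabilityMeasure_latentLaw hκ0 hκ1
  have mixture : ∑ b, ENNReal.ofReal (if b then κ else 1 - κ) • latentLaw κ b =
      volume.restrict (Set.Icc 0 1) := by
    simpa [Fintype.sum_bool, latentLaw] using ofReal_smul_unifMeasure_add hκ0 hκ1
  have : SigmaFinite (∑ b, ENNReal.ofReal (if b then κ else 1 - κ) • latentLaw κ b) := by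
    rw [mixture]
    infer_instance
  rw [← mixture, ← sum_smul_pi_eq_pi_sum]
  refine Finset.sum_congr rfl fun l _ ↦ ?_
  rw [labelMass, ENNReal.ofReal_prod_of_nonneg]
  intro i _
  split_ifs <;> linarith

theorem mixCDF_eq_cdf_limitLaw {μ : ℝ → ℝ} (hμ : Measurable fun u : unitInterval ↦ μ u) (x : ℝ) :
    κ * mixCDF μ 0 κ x + (1 - κ) * mixCDF μ κ 1 x =
      cdf (limitLaw volume fun u : unitInterval ↦ μ u) x := by
  have := isProbabilityMeasure_limitLaw (π := volume) hμ
  have := isProbabilityMeasure_unifMeasure hκ0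
  have := isProbabilityMeasure_unifMeasure hκ1
  have h_meas : Measurable fun z : ℝ × unitInterval ↦ z.1 + μ z.2 :=
    measurable_fst.add (hμ.comp measurable_snd)
  have limitLaw_Iic : limitLaw volume (fun u : unitInterval ↦ μ u) (Set.Iic x) =
      (gaussianReal 0 1).prod (volume.restrict (Set.Icc 0 1)) {z | z.1 + μ z.2 ≤ x} := by
    rw [limitLaw, Measure.map_apply h_meas measurableSet_Iic]
    exact ((MeasurePreserving.id (gaussianReal 0 1)).prod
      unitInterval.measurePreserving_coe).measure_preimage_emb
        (MeasurableEmbedding.id.prodMap unitInterval.measurableEmbedding_coe)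
        {z : ℝ × ℝ | z.1 + μ z.2 ≤ x}
  rw [cdf_eq_real, measureReal_def, limitLaw_Iic, ← ofReal_smul_unifMeasure_add hκ0 hκ1,
    Measure.prod_add, Measure.prod_smul_right, Measure.prod_smul_right, Measure.add_apply,
    Measure.smul_apply, Measure.smul_apply, smul_eq_mul, smul_eq_mul,
    ENNReal.toReal_add (by finiteness) (by finiteness), ENNReal.toReal_mul, ENNReal.toReal_mul,
    ENNReal.toReal_ofReal hκ0.le, ENNReal.toReal_ofReal (sub_nonneg.2 hκ1.le)]
  rfl

end LatentPositions

theorem graphonEdgeMass_adjMatrix {n : ℕ} (w : ℝ → ℝ → ℝ) (u : Fin n → ℝ) (e : Edge n → Bool) :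
    graphonEdgeMass w u (adjMatrix e) = edgeWeight w u e := by
  rw [graphonEdgeMass, Finset.prod_subtype (p := fun p ↦ p.1 < p.2) _ (by simp)]
  exact Finset.prod_congr rfl fun p _ ↦ by rw [adjMatrix_edge]

theorem lintegral_edgeWeight_unitInterval {w : ℝ → ℝ → ℝ} (hw : Measurable (Function.uncurry w))
    {n : ℕ} (e : Edge n → Bool) :
    (∫⁻ u : Fin n → unitInterval, ENNReal.ofReal (edgeWeight (fun x y : unitInterval ↦ w x y) u e)
        ∂Measure.pi fun _ ↦ volume) =
      ∫⁻ u, ENNReal.ofReal (edgeWeight w u e) ∂Measure.pi fun _ ↦ volume.restrict (Set.Icc 0 1) :=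
  (measurePreserving_pi _ _ fun _ ↦ unitInterval.measurePreserving_coe).lintegral_comp
    (measurable_edgeWeight hw e).ennreal_ofReal

namespace IsLabelledGraphon

variable {Ω : Type*} [MeasurableSpace Ω] {P : Measure Ω} {n : ℕ} {w : ℝ → ℝ → ℝ} {κ : ℝ}
  {c : Ω → Fin n → Bool} {U : Ω → Fin n → ℝ} {A : Ω → Fin n → Fin n → Bool}
  (h : IsLabelledGraphon P n w κ c U A)

include h

theorem measure_label_eq_and_adjMatrix_eq (l : Fin n → Bool) (e : Edge n → Bool) :
    P {ω | c ω = l ∧ A ω = adjMatrix e} = ENNReal.ofReal (labelMass κ l) *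
      ∫⁻ u, ENNReal.ofReal (edgeWeight w u e) ∂Measure.pi fun i ↦ latentLaw κ (l i) := by
  have := h.law l (fun _ ↦ Set.univ) (fun _ ↦ .univ) (adjMatrix e) (adjMatrix_comm e)
    (adjMatrix_self e)
  simpa only [Set.mem_univ, implies_true, true_and, Set.pi_univ, Measure.restrict_univ,
    graphonEdgeMass_adjMatrix] using this

variable (hκ0 : 0 < κ) (hκ1 : κ < 1)

include hκ0 hκ1

theorem measure_eq_adjMatrix_le (e : Edge n → Bool) :
    P {ω | A ω = adjMatrix e} ≤ ∫⁻ u, ENNReal.ofReal (edgeWeight w u e)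
      ∂Measure.pi fun _ ↦ volume.restrict (Set.Icc 0 1) := by
  rw [← sum_labelMass_smul_pi_latentLaw hκ0 hκ1, lintegral_finsetSum_measure]
  simp only [lintegral_smul_measure, smul_eq_mul, ← h.measure_label_eq_and_adjMatrix_eq]
  refine (measure_mono fun ω hω ↦ ?_).trans (measure_biUnion_finset_le _ _)
  exact Set.mem_biUnion (Finset.mem_univ (c ω)) ⟨rfl, hω⟩

theorem measure_mem_le_graphonLaw (hw : Measurable (Function.uncurry w))
    (B : Set (Fin n → Fin n → Bool)) :
    P {ω | A ω ∈ B} ≤ graphonLaw (fun u v : unitInterval ↦ w u v) volume n B := by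
  classical
  rw [graphonLaw_apply]
  simp only [lintegral_edgeWeight_unitInterval hw]
  refine (measure_mono fun ω hω ↦ ?_).trans ((measure_biUnion_finset_le _ _).trans
    (Finset.sum_le_sum fun e _ ↦ h.measure_eq_adjMatrix_le hκ0 hκ1 e))
  have restrict_eq := adjMatrix_restrict (h.symm ω) (h.loopless ω)
  exact Set.mem_biUnion (mem_filter.2 ⟨mem_univ _, restrict_eq.symm ▸ hω⟩) restrict_eq.symm

end IsLabelledGraphon

theorem intervalIntegral_eq_integral_unitInterval (f : ℝ → ℝ) :
    ∫ v in (0 : ℝ)..1, f v = ∫ v : unitInterval, f v := by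
  rw [intervalIntegral.integral_of_le zero_le_one, ← integral_Icc_eq_integral_Ioc]
  exact (unitInterval.measurePreserving_coe.integral_comp
    unitInterval.measurableEmbedding_coe f).symm

theorem isAsymptoticallyHomogeneous_unitInterval {w : ℕ → ℝ → ℝ → ℝ} {p : ℕ → ℝ} {μ : ℝ → ℝ}
    (hw_symm : ∀ n u v, w n u v = w n v u)
    (hw_meas : ∀ n, Measurable (Function.uncurry (w n)))
    (hw_range : ∀ n, ∀ u ∈ Set.Icc (0 : ℝ) 1, ∀ v ∈ Set.Icc (0 : ℝ) 1,
      w n u v ∈ Set.Icc (0 : ℝ) 1)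
    (hvar : Tendsto (fun n : ℕ ↦ n * p n * (1 - p n)) atTop atTop)
    (hsq : ∀ u ∈ Set.Icc (0 : ℝ) 1, Tendsto
      (fun n ↦ (∫ v in (0 : ℝ)..1, (w n u v - p n) ^ 2) / (p n * (1 - p n))) atTop (nhds 0))
    (hmean : ∀ u ∈ Set.Icc (0 : ℝ) 1, Tendsto
      (fun n : ℕ ↦ √(n / (p n * (1 - p n))) * ∫ v in (0 : ℝ)..1, (w n u v - p n))
      atTop (nhds (μ u))) :
    IsAsymptoticallyHomogeneous volume (fun n (u v : unitInterval) ↦ w n u v) p fun u ↦ μ u where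
  isGraphon n :=
    { symm := fun u v ↦ hw_symm n u v
      measurable := (hw_meas n).comp
        (f := fun z : unitInterval × unitInterval ↦ ((z.1 : ℝ), (z.2 : ℝ))) (by fun_prop)
      mem_Icc := fun u v ↦ hw_range n u u.2 v v.2 }
  tendsto_variance := hvar
  tendsto_integral_sq u := by
    simpa only [intervalIntegral_eq_integral_unitInterval] using hsq u u.2
  tendsto_integral u := by
    simpa only [intervalIntegral_eq_integral_unitInterval] using hmean u u.2

theorem sq_le_mul_one_sub_of_mem_Ioo {p ε : ℝ} (hε : 0 < ε) (hp : p ∈ Set.Ioo ε (1 - ε)) :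
    ε ^ 2 ≤ p * (1 - p) := by
  rw [sq]
  exact mul_le_mul hp.1.le (le_sub_comm.1 hp.2.le) hε.le (hε.trans hp.1).le

theorem tendsto_variance_of_mem_Ioo {p : ℕ → ℝ} {ε : ℝ} (hε : 0 < ε)
    (hp : ∀ n, p n ∈ Set.Ioo ε (1 - ε)) :
    Tendsto (fun n : ℕ ↦ n * p n * (1 - p n)) atTop atTop := by
  refine tendsto_atTop_mono (fun n ↦ ?_)
    (tendsto_natCast_atTop_atTop.atTop_mul_const (pow_pos hε 2))
  rw [mul_assoc]
  gcongr
  exact sq_le_mul_one_sub_of_mem_Ioo hε (hp n)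

theorem tendsto_intervalIntegral_sq_div {f : ℕ → ℝ → ℝ} {q : ℕ → ℝ} {a b c C : ℝ} (hc : 0 < c)
    (hq : ∀ n, c ≤ q n) (hf : ∀ n : ℕ, 1 ≤ n → ∀ v ∈ Set.uIoc a b, |f n v| ≤ C / √n) :
    Tendsto (fun n ↦ (∫ v in a..b, f n v ^ 2) / q n) atTop (nhds 0) := by
  refine squeeze_zero_norm' ?_
    (tendsto_const_div_atTop_nhds_zero_nat (C ^ 2 * |b - a| / c))
  filter_upwards [eventually_ge_atTop 1] with n hn
  have sq_le : ∀ v ∈ Set.uIoc a b, ‖f n v ^ 2‖ ≤ C ^ 2 / n := fun v hv ↦ by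
    have := pow_le_pow_left₀ (abs_nonneg _) (hf n hn v hv) 2
    rwa [div_pow, Real.sq_sqrt n.cast_nonneg, ← abs_pow] at this
  calc ‖(∫ v in a..b, f n v ^ 2) / q n‖
      = ‖∫ v in a..b, f n v ^ 2‖ / q n := by
        rw [norm_div, Real.norm_of_nonneg (hc.le.trans (hq n))]
    _ ≤ C ^ 2 / n * |b - a| / c := by
        gcongr
        exacts [intervalIntegral.norm_integral_le_of_norm_le_const sq_le, hq n]
    _ = C ^ 2 * |b - a| / c / n := by ring

theorem tendsto_integral_sq_of_abs_sub_le {w : ℕ → ℝ → ℝ → ℝ} {p : ℕ → ℝ} {ε : ℝ} (hε : 0 < ε)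
    (hp : ∀ n, p n ∈ Set.Ioo ε (1 - ε))
    (hconc : ∃ C : ℝ, ∀ n : ℕ, 1 ≤ n → ∀ u ∈ Set.Icc (0 : ℝ) 1, ∀ v ∈ Set.Icc (0 : ℝ) 1,
      |w n u v - p n| ≤ C / √n) (u : ℝ) (hu : u ∈ Set.Icc (0 : ℝ) 1) :
    Tendsto (fun n ↦ (∫ v in (0 : ℝ)..1, (w n u v - p n) ^ 2) / (p n * (1 - p n))) atTop
      (nhds 0) := by
  obtain ⟨C, hC⟩ := hconc
  refine tendsto_intervalIntegral_sq_div (pow_pos hε 2)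
    (fun n ↦ sq_le_mul_one_sub_of_mem_Ioo hε (hp n))
    fun n hn v hv ↦ hC n hn u hu v (Set.Ioc_subset_Icc_self ?_)
  rwa [Set.uIoc_of_le zero_le_one] at hv

theorem statement_5_general
    (κ : ℝ) (hκ0 : 0 < κ) (hκ1 : κ < 1)
    (w : ℕ → ℝ → ℝ → ℝ) (p : ℕ → ℝ) (μ : ℝ → ℝ)
    (hw_symm : ∀ n u v, w n u v = w n v u)
    (hw_meas : ∀ n, Measurable (Function.uncurry (w n)))
    (hw_range : ∀ n, ∀ u ∈ Set.Icc (0 : ℝ) 1, ∀ v ∈ Set.Icc (0 : ℝ) 1,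
      w n u v ∈ Set.Icc (0 : ℝ) 1)
    (hvar : Tendsto (fun n : ℕ ↦ n * p n * (1 - p n)) atTop atTop)
    (hsq : ∀ u ∈ Set.Icc (0 : ℝ) 1, Tendsto
      (fun n ↦ (∫ v in (0 : ℝ)..1, (w n u v - p n) ^ 2) / (p n * (1 - p n))) atTop (nhds 0))
    (hmean : ∀ u ∈ Set.Icc (0 : ℝ) 1, Tendsto
      (fun n : ℕ ↦ √(n / (p n * (1 - p n))) * ∫ v in (0 : ℝ)..1, (w n u v - p n))
      atTop (nhds (μ u)))
    (Ω : ℕ → Type*) [∀ n, MeasurableSpace (Ω n)] (P : ∀ n, Measure (Ω n))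
    (c : ∀ n, Ω n → Fin n → Bool) (U : ∀ n, Ω n → Fin n → ℝ)
    (A : ∀ n, Ω n → Fin n → Fin n → Bool)
    (hmodel : ∀ n, IsLabelledGraphon (P n) n (w n) κ (c n) (U n) (A n)) :
    ∀ ε > 0, Tendsto
      (fun n ↦ P n {ω | ε < ⨆ x : ℝ, |empCDF (A n ω) (p n) x -
        (κ * mixCDF μ 0 κ x + (1 - κ) * mixCDF μ κ 1 x)|})
      atTop (nhds 0) := by
  intro ε hε
  have h := isAsymptoticallyHomogeneous_unitInterval hw_symm hw_meas hw_range hvar hsq hmean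
  simp only [mixCDF_eq_cdf_limitLaw hκ0 hκ1 h.measurable_limit]
  exact tendsto_of_tendsto_of_tendsto_of_le_of_le tendsto_const_nhds
    (h.tendsto_measure_lt_iSup_abs_empCDF_sub hε) (fun _ ↦ zero_le)
    fun n ↦ (hmodel n).measure_mem_le_graphonLaw hκ0 hκ1 (hw_meas n) _

theorem statement_5
    (κ εw : ℝ) (hκ0 : 0 < κ) (hκ : κ < 1 / 2) (hεw : 0 < εw)
    (w : ℕ → ℝ → ℝ → ℝ) (p : ℕ → ℝ) (μ : ℝ → ℝ)
    (hw_symm : ∀ n u v, w n u v = w n v u)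
    (hw_meas : ∀ n, Measurable (Function.uncurry (w n)))
    (hw_range : ∀ n, ∀ u ∈ Set.Icc (0:ℝ) 1, ∀ v ∈ Set.Icc (0:ℝ) 1,
      w n u v ∈ Set.Icc (0:ℝ) 1)
    -- Assumption 1
    (hp : ∀ n, p n ∈ Set.Ioo εw (1 - εw))
    (hconc : ∃ C : ℝ, ∀ n : ℕ, 1 ≤ n → ∀ u ∈ Set.Icc (0:ℝ) 1,
      ∀ v ∈ Set.Icc (0:ℝ) 1, |w n u v - p n| ≤ C / Real.sqrt n)
    -- Assumption 2
    (hmean : ∀ u ∈ Set.Icc (0:ℝ) 1,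
      Tendsto (fun n : ℕ =>
          Real.sqrt (n / (p n * (1 - p n))) * ∫ v in (0:ℝ)..1, (w n u v - p n))
        atTop (nhds (μ u)))
    (Ω : ℕ → Type) [mΩ : ∀ n, MeasurableSpace (Ω n)] (P : ∀ n, Measure (Ω n))
    (c : ∀ n, Ω n → Fin n → Bool) (U : ∀ n, Ω n → Fin n → ℝ)
    (A : ∀ n, Ω n → Fin n → Fin n → Bool)
    (hmodel : ∀ n, IsLabelledGraphon (P n) n (w n) κ (c n) (U n) (A n)) :
    ∀ ε > 0, Tendsto
      (fun n => P n {ω | ε < ⨆ x : ℝ, |empCDF (A n ω) (p n) x -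
        (κ * mixCDF μ 0 κ x + (1 - κ) * mixCDF μ κ 1 x)|})
      atTop (nhds 0) :=
  statement_5_general κ hκ0 (hκ.trans one_half_lt_one) w p μ hw_symm hw_meas hw_range
    (tendsto_variance_of_mem_Ioo hεw hp) (tendsto_integral_sq_of_abs_sub_le hεw hp hconc) hmean
    Ω P c U A hmodel

end
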